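/- arXiv:2602.20868 — 6 statements merged into one kernel-verified Lean document; each statement's English description precedes it below -/
import Mathlib

section
/- Fix a trading network market and an arbitrary real ε > 0. If the market admits a competitive equilibrium, then the trading network game admits an ε-tight Nash equilibrium. In particular, if every agent's valuation is fully substitutable, then an ε-tight Nash equilibrium exists. -/
/-!
Only the offers of the *other* side matter to an agent, so an offer profile is a Nash equilibrium
as soon as the active trades form an optimal bundle for each agent `i` at the prices `view i` that
`i` faces: the seller's offers `α` on the trades `i` buys, the buyer's offers `β` on the trades `i`
sells (`nash_of_view`).  Starting from a competitive equilibrium `(p, Φ)`, put `α = β = p` on `Φ`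
and `α = p + ε`, `β = p` off `Φ`; widening the spread on unused trades keeps the chosen
bundles optimal (`demand_of_cost_le`), which gives the first claim.

For the second claim the profile is produced by an ascending auction.  Regard each trade `ω` as an
object which `i` *holds* if `i` is the buyer and trades `ω`, or `i` is the seller and does not.
Full substitutability says that after a price rise of one object an agent can go on holding
all other objects held before (`exists_demand_raise`; for a bought trade the definition speaks of
price cuts instead, and the version for price rises follows by a perturbation making the given
bundle the unique optimum).
Prices live on the grid `ε (k - M)`, `0 ≤ k ≤ 2M`.  At the lowest price every agent also *claims*
the object, and at the highest price the buyer never does.  All prices start at the bottom, where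
both sides claim everything; while both sides claim an object, its price is raised by `ε`, for the
buyer first and then for the seller.  Every object remains claimed by at least one side, and the two
sides see different prices only while the seller claims the object (`AuctionState`).  The auction
stops with every object claimed by exactly one side (`exists_terminal`).  If a claim disagreed with
a true demand there, one agent would be paying `ε M` uncompensated; as all utilities are
nonnegative, this is impossible once `ε M` exceeds the total attainable value
(`terminal_consistent`).  Hence the demands fit together to a set `Φ` of trades on which both sides
see the same price, and off `Φ` the buyer's price may be set to the seller's plus `ε`.
-/

open Finset

variable {I Ω : Type*} [Fintype I] [DecidableEq I] [Fintype Ω] [DecidableEq Ω]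

/-- The trades involving agent `i`. -/
def tradesOf (b s : Ω → I) (i : I) : Finset Ω :=
  Finset.univ.filter fun ω => b ω = i ∨ s ω = i

/-- `χ^i_ω`: `1` if `i` buys `ω`, `-1` if `i` sells `ω`, `0` otherwise. -/
def chi (b s : Ω → I) (i : I) (ω : Ω) : ℝ :=
  if b ω = i then 1 else if s ω = i then -1 else 0

/-- Quasi-linear utility of agent `i` for bundle `Ψ` at prices `p`. -/
noncomputable def utility (b s : Ω → I) (v : I → Finset Ω → EReal) (i : I)
    (Ψ : Finset Ω) (p : Ω → ℝ) : EReal :=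
  v i Ψ - ((∑ ω ∈ Ψ, chi b s i ω * p ω : ℝ) : EReal)

/-- Demand of agent `i` at prices `p`: utility-maximizing bundles `Ψ ⊆ Ω_i`. -/
noncomputable def demand (b s : Ω → I) (v : I → Finset Ω → EReal) (i : I)
    (p : Ω → ℝ) : Set (Finset Ω) :=
  {Ψ | Ψ ⊆ tradesOf b s i ∧
    ∀ Ψ' ⊆ tradesOf b s i, utility b s v i Ψ' p ≤ utility b s v i Ψ p}

/-- A market arrangement `(p, Φ)` is a competitive equilibrium. -/
noncomputable def IsCompetitiveEquilibrium (b s : Ω → I) (v : I → Finset Ω → EReal)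
    (p : Ω → ℝ) (Φ : Finset Ω) : Prop :=
  ∀ i : I, Φ ∩ tradesOf b s i ∈ demand b s v i p

/-- Full substitutability of agent `i`'s valuation. -/
noncomputable def FullySubstitutable (b s : Ω → I) (v : I → Finset Ω → EReal) (i : I) : Prop :=
  (∀ p p' : Ω → ℝ, (∀ ω, s ω = i → p ω = p' ω) → (∀ ω, b ω = i → p' ω ≤ p ω) →
    ∀ Ψ ∈ demand b s v i p, ∃ Ψ' ∈ demand b s v i p',
      (∀ ω ∈ Ψ', b ω = i → p ω = p' ω → ω ∈ Ψ) ∧ (∀ ω ∈ Ψ, s ω = i → ω ∈ Ψ')) ∧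
  (∀ p p' : Ω → ℝ, (∀ ω, b ω = i → p ω = p' ω) → (∀ ω, s ω = i → p ω ≤ p' ω) →
    ∀ Ψ ∈ demand b s v i p, ∃ Ψ' ∈ demand b s v i p',
      (∀ ω ∈ Ψ', s ω = i → p ω = p' ω → ω ∈ Ψ) ∧ (∀ ω ∈ Ψ, b ω = i → ω ∈ Ψ'))

/-- The set of trades that are active under offer profile `σ`. -/
noncomputable def activeTrades (b s : Ω → I) (σ : I → Ω → ℝ) : Finset Ω :=
  Finset.univ.filter fun ω => σ (b ω) ω = σ (s ω) ω

/-- Payoff of agent `i` in the trading network game under offers `σ`. -/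
noncomputable def payoff (b s : Ω → I) (v : I → Finset Ω → EReal)
    (σ : I → Ω → ℝ) (i : I) : EReal :=
  utility b s v i (activeTrades b s σ ∩ tradesOf b s i) (fun ω => σ (b ω) ω)

/-- Nash equilibrium of the trading network game. -/
noncomputable def IsNashEquilibrium (b s : Ω → I) (v : I → Finset Ω → EReal)
    (σ : I → Ω → ℝ) : Prop :=
  ∀ (i : I) (τ : Ω → ℝ), payoff b s v (Function.update σ i τ) i ≤ payoff b s v σ i

/-- `ε`-tightness of an offer profile. -/
def IsTight (b s : Ω → I) (σ : I → Ω → ℝ) (ε : ℝ) : Prop :=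
  ∀ ω : Ω, |σ (b ω) ω - σ (s ω) ω| ≤ ε

/-- The maximum vertex degree `Δ` of the market. -/
def maxDegree (b s : Ω → I) : ℕ :=
  Finset.univ.sup fun i => (tradesOf b s i).card

/-- Trades whose buyer and seller both lie in coalition `C`. -/
def coalitionTrades (b s : Ω → I) (C : Finset I) : Finset Ω :=
  Finset.univ.filter fun ω => b ω ∈ C ∧ s ω ∈ C

/-- The characteristic function `w(C)` of the cooperative market game. -/
noncomputable def coalitionValue (b s : Ω → I) (v : I → Finset Ω → EReal)
    (C : Finset I) : EReal :=
  (coalitionTrades b s C).powerset.sup' (Finset.powerset_nonempty _)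
    fun Φ => ∑ i ∈ C, v i (Φ ∩ tradesOf b s i)

/-- A set of trades is efficient if it attains the market value. -/
noncomputable def IsEfficient (b s : Ω → I) (v : I → Finset Ω → EReal)
    (Φ : Finset Ω) : Prop :=
  (∑ i, v i (Φ ∩ tradesOf b s i)) = coalitionValue b s v Finset.univ

/-- A core imputation of the cooperative market game. -/
noncomputable def IsCoreImputation (b s : Ω → I) (v : I → Finset Ω → EReal)
    (x : I → ℝ) : Prop :=
  (∀ i, 0 ≤ x i) ∧ (((∑ i, x i : ℝ) : EReal) = coalitionValue b s v Finset.univ) ∧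
  ∀ C : Finset I, coalitionValue b s v C ≤ ((∑ i ∈ C, x i : ℝ) : EReal)

/-- Agent `i` is essential if it is involved in every efficient set of trades. -/
noncomputable def IsEssential (b s : Ω → I) (v : I → Finset Ω → EReal) (i : I) : Prop :=
  ∀ Φ : Finset Ω, IsEfficient b s v Φ → (Φ ∩ tradesOf b s i).Nonempty

/-- Agents involved in at least one trade of `Ψ`. -/
noncomputable def involvedAgents (b s : Ω → I) (Ψ : Finset Ω) : Finset I :=
  Finset.univ.filter fun i => (Ψ ∩ tradesOf b s i).Nonempty

/-- `(q, Ψ)` blocks the market outcome `(p, Φ)`. -/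
noncomputable def Blocks (b s : Ω → I) (v : I → Finset Ω → EReal) (p : Ω → ℝ)
    (Φ : Finset Ω) (q : Ω → ℝ) (Ψ : Finset Ω) : Prop :=
  (∀ i ∈ involvedAgents b s Ψ,
    utility b s v i (Φ ∩ tradesOf b s i) p ≤ utility b s v i (Ψ ∩ tradesOf b s i) q) ∧
  (∃ i ∈ involvedAgents b s Ψ,
    utility b s v i (Φ ∩ tradesOf b s i) p < utility b s v i (Ψ ∩ tradesOf b s i) q)

/-- A market outcome is in the core if no coalition can block it. -/
noncomputable def IsCoreOutcome (b s : Ω → I) (v : I → Finset Ω → EReal)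
    (p : Ω → ℝ) (Φ : Finset Ω) : Prop :=
  ¬ ∃ (q : Ω → ℝ) (Ψ : Finset Ω), Blocks b s v p Φ q Ψ

set_option linter.unusedSectionVars false

/-! ### Demand in terms of real numbers -/

/-- Net payment of agent `i` for the bundle `X` at prices `q`. -/
noncomputable def cost (b s : Ω → I) (i : I) (X : Finset Ω) (q : Ω → ℝ) : ℝ :=
  ∑ ω ∈ X, chi b s i ω * q ω

/-- Since `∅` has value `0`, an optimal bundle has finite value, and optimality can be tested on
bundles of finite value with real arithmetic. -/
lemma mem_demand_iff (b s : Ω → I) (v : I → Finset Ω → EReal)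
    (hv0 : ∀ i, v i ∅ = 0) (hvtop : ∀ i Ψ, v i Ψ ≠ ⊤) (i : I) (q : Ω → ℝ) (Ψ : Finset Ω) :
    Ψ ∈ demand b s v i q ↔ Ψ ⊆ tradesOf b s i ∧ v i Ψ ≠ ⊥ ∧
      ∀ X ⊆ tradesOf b s i, v i X ≠ ⊥ →
        (v i X).toReal - cost b s i X q ≤ (v i Ψ).toReal - cost b s i Ψ q := by
  have key : ∀ X, v i X ≠ ⊥ →
      utility b s v i X q = (((v i X).toReal - cost b s i X q : ℝ) : EReal) := by
    intro X hX
    rw [EReal.coe_sub, EReal.coe_toReal (hvtop i X) hX]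
    rfl
  have keybot : ∀ X, v i X = ⊥ → utility b s v i X q = ⊥ := by
    intro X hX
    simp only [utility, hX]
    exact EReal.bot_sub _
  constructor
  · rintro ⟨h1, h2⟩
    have hne : v i Ψ ≠ ⊥ := by
      intro h
      have h3 := h2 ∅ (Finset.empty_subset _)
      rw [keybot Ψ h, key ∅ (by rw [hv0]; exact EReal.zero_ne_bot)] at h3
      exact EReal.coe_ne_bot _ (le_bot_iff.mp h3)
    refine ⟨h1, hne, fun X hX hXb => ?_⟩
    have h3 := h2 X hX
    rw [key X hXb, key Ψ hne] at h3
    exact EReal.coe_le_coe_iff.mp h3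
  · rintro ⟨h1, hne, h2⟩
    refine ⟨h1, fun X hX => ?_⟩
    by_cases hXb : v i X = ⊥
    · rw [keybot X hXb]
      exact bot_le
    · rw [key X hXb, key Ψ hne]
      exact EReal.coe_le_coe_iff.mpr (h2 X hX hXb)

lemma demand_nonempty (b s : Ω → I) (v : I → Finset Ω → EReal)
    (i : I) (q : Ω → ℝ) : ∃ Ψ, Ψ ∈ demand b s v i q := by
  obtain ⟨Ψ, hΨ, hmax⟩ := Finset.exists_max_image (tradesOf b s i).powerset
    (fun X => utility b s v i X q) ⟨∅, by simp⟩
  exact ⟨Ψ, Finset.mem_powerset.mp hΨ, fun X hX => hmax X (Finset.mem_powerset.mpr hX)⟩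

/-- A bundle stays optimal when prices turn against the agent on trades outside the bundle. -/
lemma demand_of_cost_le (b s : Ω → I) (v : I → Finset Ω → EReal)
    (hv0 : ∀ i, v i ∅ = 0) (hvtop : ∀ i Ψ, v i Ψ ≠ ⊤) (i : I) (q q' : Ω → ℝ) (Ψ : Finset Ω)
    (hΨ : Ψ ∈ demand b s v i q)
    (heq : ∀ ω ∈ Ψ, chi b s i ω * q' ω = chi b s i ω * q ω)
    (hle : ∀ ω, chi b s i ω * q ω ≤ chi b s i ω * q' ω) : Ψ ∈ demand b s v i q' := by
  rw [mem_demand_iff b s v hv0 hvtop] at hΨ ⊢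
  obtain ⟨h1, h2, h3⟩ := hΨ
  refine ⟨h1, h2, fun X hX hXb => ?_⟩
  have e1 : cost b s i Ψ q' = cost b s i Ψ q := Finset.sum_congr rfl heq
  have e2 : cost b s i X q ≤ cost b s i X q' := Finset.sum_le_sum fun ω _ => hle ω
  have := h3 X hX hXb
  linarith

/-! ### From prices seen by the two sides to Nash equilibria -/

/-- The prices agent `i` faces when buyers face `α` and sellers face `β`; set to `0` on trades not
involving `i`, where they are irrelevant. -/
noncomputable def view (b s : Ω → I) (α β : Ω → ℝ) (i : I) (ω : Ω) : ℝ :=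
  if b ω = i then α ω else if s ω = i then β ω else 0

lemma nash_of_view (b s : Ω → I) (v : I → Finset Ω → EReal) (hbs : ∀ ω, b ω ≠ s ω)
    (ε : ℝ) (α β : Ω → ℝ) (Φ : Finset Ω)
    (hD : ∀ i, Φ ∩ tradesOf b s i ∈ demand b s v i (view b s α β i))
    (hΦ : ∀ ω, ω ∈ Φ ↔ α ω = β ω) (ht : ∀ ω, |β ω - α ω| ≤ ε) :
    ∃ σ : I → Ω → ℝ, IsNashEquilibrium b s v σ ∧ IsTight b s σ ε := by
  set σ : I → Ω → ℝ := fun i ω => if b ω = i then β ω else α ω with hσ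
  have hb : ∀ ω, σ (b ω) ω = β ω := fun ω => by simp [hσ]
  have hs : ∀ ω, σ (s ω) ω = α ω := fun ω => by simp [hσ, hbs ω]
  -- Whatever `i` offers, the active trades of `i` are priced by the other side.
  have hpay : ∀ i τ, payoff b s v (Function.update σ i τ) i =
      utility b s v i (activeTrades b s (Function.update σ i τ) ∩ tradesOf b s i)
        (view b s α β i) := by
    intro i τ
    unfold payoff utility
    congr 2
    refine Finset.sum_congr rfl fun ω hω => ?_
    simp only [activeTrades, tradesOf, Finset.mem_inter, Finset.mem_filter, Finset.mem_univ,
      true_and] at hω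
    obtain ⟨hact, hω⟩ := hω
    congr 1
    change Function.update σ i τ (b ω) ω = _
    by_cases h : b ω = i
    · have h' : s ω ≠ i := fun h' => hbs ω (h.trans h'.symm)
      rw [hact, Function.update_of_ne h', hs]
      simp [view, h]
    · have h' : s ω = i := hω.resolve_left h
      rw [Function.update_of_ne h, hb]
      simp [view, h, h']
  have hact : activeTrades b s σ = Φ := by
    ext ω
    simp only [activeTrades, Finset.mem_filter, Finset.mem_univ, true_and, hb, hs, hΦ]
    exact eq_comm
  refine ⟨σ, fun i τ => ?_, fun ω => ?_⟩
  · have h0 := hpay i (σ i)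
    rw [Function.update_eq_self, hact] at h0
    rw [h0, hpay]
    exact (hD i).2 _ Finset.inter_subset_right
  · rw [hb, hs]
    exact ht ω

/-- Optimal bundles that fit together, with both sides seeing the same price on `Φ`, give a tight
Nash equilibrium: off `Φ`, raising the price seen by the buyer to `β + ε` makes the trade inactive
and keeps the bundles optimal. -/
lemma nash_of_spread (b s : Ω → I) (v : I → Finset Ω → EReal)
    (hbs : ∀ ω, b ω ≠ s ω) (hv0 : ∀ i, v i ∅ = 0) (hvtop : ∀ i Ψ, v i Ψ ≠ ⊤)
    (ε : ℝ) (hε : 0 < ε) (α β : Ω → ℝ) (Φ : Finset Ω)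
    (hD : ∀ i, Φ ∩ tradesOf b s i ∈ demand b s v i (view b s α β i))
    (hΦ : ∀ ω ∈ Φ, α ω = β ω) (hle : ∀ ω, α ω ≤ β ω + ε) :
    ∃ σ : I → Ω → ℝ, IsNashEquilibrium b s v σ ∧ IsTight b s σ ε := by
  refine nash_of_view b s v hbs ε (fun ω => if ω ∈ Φ then α ω else β ω + ε) β Φ
    (fun i => demand_of_cost_le b s v hv0 hvtop i _ _ _ (hD i) ?_ ?_) ?_ ?_
  · intro ω hω
    simp [view, (Finset.mem_inter.mp hω).1]
  · intro ω
    by_cases h : b ω = i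
    · by_cases h1 : ω ∈ Φ <;> simp [chi, view, h, h1, hle]
    · simp [chi, view, h]
  · intro ω
    by_cases h : ω ∈ Φ
    · simp [h, hΦ ω h]
    · simp [h, hε.ne']
  · intro ω
    by_cases h : ω ∈ Φ
    · simp [h, hΦ ω h, hε.le]
    · simp [h, abs_of_pos hε]

/-! ### Price rises under full substitutability -/

/-- On finitely many bundles, a small enough perturbation of an objective `f` preserves all strict
comparisons. -/
lemma exists_small_perturbation (f e : Finset Ω → ℝ) :
    ∃ δ : ℝ, 0 < δ ∧ ∀ X Y, f X < f Y → f X - δ * e X < f Y - δ * e Y := by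
  have h : ∀ᶠ δ : ℝ in nhdsWithin 0 (Set.Ioi 0),
      ∀ X Y, f X < f Y → f X - δ * e X < f Y - δ * e Y := by
    rw [Filter.eventually_all]
    intro X
    rw [Filter.eventually_all]
    intro Y
    by_cases hXY : f X < f Y
    · have h1 : ContinuousAt (fun δ : ℝ => f X - δ * e X) 0 := by fun_prop
      have h2 : ContinuousAt (fun δ : ℝ => f Y - δ * e Y) 0 := by fun_prop
      have := h1.eventually_lt h2 (by simpa using hXY)
      exact (this.filter_mono nhdsWithin_le_nhds).mono fun δ hδ _ => hδ
    · exact Filter.Eventually.of_forall fun δ hlt => absurd hlt hXY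
  obtain ⟨δ, hδ, hpos⟩ := (h.and self_mem_nhdsWithin).exists
  exact ⟨δ, hpos, hδ⟩

lemma sum_sign_lt (Ψ X : Finset Ω) (hne : X ≠ Ψ) :
    ∑ ω ∈ Ψ, (if ω ∈ Ψ then (-1 : ℝ) else 1) < ∑ ω ∈ X, (if ω ∈ Ψ then (-1 : ℝ) else 1) := by
  have key : ∀ Y : Finset Ω, ∑ ω ∈ Y, (if ω ∈ Ψ then (-1 : ℝ) else 1)
      = ∑ ω, if ω ∈ Y then (if ω ∈ Ψ then (-1 : ℝ) else 1) else 0 := by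
    intro Y
    rw [Finset.sum_ite_mem, Finset.univ_inter]
  rw [key Ψ, key X]
  obtain ⟨ω, hω⟩ : ∃ ω, ¬ (ω ∈ X ↔ ω ∈ Ψ) := by
    by_contra! h
    exact hne (Finset.ext h)
  refine Finset.sum_lt_sum (fun ω _ => ?_) ⟨ω, Finset.mem_univ _, ?_⟩
  · by_cases h1 : ω ∈ X <;> by_cases h2 : ω ∈ Ψ <;> simp [h1, h2]
  · by_cases h1 : ω ∈ X <;> by_cases h2 : ω ∈ Ψ <;> simp [h1, h2] at hω ⊢

/-- If the price of one trade involving `i` rises, then some optimal bundle still contains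
all other trades `i` was buying and no trade, other than the one in question, that `i` was not
selling before. -/
lemma exists_demand_raise (b s : Ω → I) (v : I → Finset Ω → EReal)
    (hbs : ∀ ω, b ω ≠ s ω) (hv0 : ∀ i, v i ∅ = 0) (hvtop : ∀ i Ψ, v i Ψ ≠ ⊤)
    (i : I) (hFS : FullySubstitutable b s v i) (q : Ω → ℝ) (ω₀ : Ω) (t : ℝ) (ht : 0 ≤ t)
    (hω₀ : b ω₀ = i ∨ s ω₀ = i) (Ψ : Finset Ω) (hΨ : Ψ ∈ demand b s v i q) :
    ∃ Ψ' ∈ demand b s v i (Function.update q ω₀ (q ω₀ + t)), ∀ ω, ω ≠ ω₀ →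
      (b ω = i → ω ∈ Ψ → ω ∈ Ψ') ∧ (s ω = i → ω ∈ Ψ' → ω ∈ Ψ) := by
  set q' := Function.update q ω₀ (q ω₀ + t) with hq'
  have hq'ne : ∀ ω, ω ≠ ω₀ → q' ω = q ω := fun ω h => Function.update_of_ne h _ _
  have hle : ∀ ω, q ω ≤ q' ω := by
    intro ω
    by_cases h : ω = ω₀
    · subst h
      simp [hq', ht]
    · exact (hq'ne ω h).ge
  rcases hω₀ with hbω | hsω
  · -- Perturb prices by `δ` in favour of `Ψ`: then `Ψ` is the only optimal bundle at low prices.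
    set d : Ω → ℝ := fun ω => if (b ω = i ↔ ω ∈ Ψ) then -1 else 1 with hd
    set e : Finset Ω → ℝ := fun X => ∑ ω ∈ X, (if ω ∈ Ψ then (-1 : ℝ) else 1) with he
    have hcost : ∀ (r : Ω → ℝ) (δ : ℝ) (X : Finset Ω), X ⊆ tradesOf b s i →
        cost b s i X (fun ω => r ω + δ * d ω) = cost b s i X r + δ * e X := by
      intro r δ X hX
      simp only [cost, he, Finset.mul_sum, ← Finset.sum_add_distrib]
      refine Finset.sum_congr rfl fun ω hω => ?_
      have hω := hX hω
      simp only [tradesOf, Finset.mem_filter, Finset.mem_univ, true_and] at hω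
      by_cases h1 : b ω = i
      · by_cases h2 : ω ∈ Ψ <;> simp [chi, hd, h1, h2]
      · have h3 : s ω = i := hω.resolve_left h1
        by_cases h2 : ω ∈ Ψ <;> simp [chi, hd, h1, h2, h3] <;> ring
    obtain ⟨δ, hδ, hpert⟩ := exists_small_perturbation
      (fun X => (v i X).toReal - cost b s i X q') e
    obtain ⟨Ψ', hΨ'⟩ := demand_nonempty b s v i (fun ω => q' ω + δ * d ω)
    obtain ⟨Ψ'', hΨ'', hbuy, hsell⟩ := hFS.1 (fun ω => q' ω + δ * d ω) (fun ω => q ω + δ * d ω)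
      (fun ω hω => by
        have : ω ≠ ω₀ := fun h => hbs ω₀ (hbω.trans (h ▸ hω).symm)
        simp [hq'ne ω this])
      (fun ω _ => by simpa using hle ω) Ψ' hΨ'
    rw [mem_demand_iff b s v hv0 hvtop] at hΨ hΨ' hΨ''
    obtain ⟨hΨ1, hΨ2, hΨ3⟩ := hΨ
    obtain ⟨hΨ'1, hΨ'2, hΨ'3⟩ := hΨ'
    obtain ⟨hΨ''1, hΨ''2, hΨ''3⟩ := hΨ''
    have heq : Ψ'' = Ψ := by
      by_contra hne
      have h1 := hΨ''3 Ψ hΨ1 hΨ2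
      have h2 := hΨ3 Ψ'' hΨ''1 hΨ''2
      rw [hcost q δ _ hΨ1, hcost q δ _ hΨ''1] at h1
      have h3 : δ * e Ψ < δ * e Ψ'' := mul_lt_mul_of_pos_left (sum_sign_lt Ψ Ψ'' hne) hδ
      linarith
    rw [heq] at hbuy hsell
    refine ⟨Ψ', ?_, fun ω hω => ⟨fun h1 h2 => ?_, fun h1 h2 => hsell ω h2 h1⟩⟩
    · rw [mem_demand_iff b s v hv0 hvtop]
      refine ⟨hΨ'1, hΨ'2, fun X hX hXb => ?_⟩
      by_contra! hlt
      have h1 := hpert _ _ hlt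
      have h2 := hΨ'3 X hX hXb
      rw [hcost q' δ _ hX, hcost q' δ _ hΨ'1] at h2
      linarith
    · exact hbuy ω h2 h1 (by simp [hq'ne ω hω])
  · obtain ⟨Ψ', hΨ', h1, h2⟩ := hFS.2 q q'
      (fun ω hω => by
        have : ω ≠ ω₀ := fun h => hbs ω₀ ((h ▸ hω).trans hsω.symm)
        exact (hq'ne ω this).symm)
      (fun ω _ => hle ω) Ψ hΨ
    exact ⟨Ψ', hΨ', fun ω hω => ⟨fun hb hm => h2 ω hm hb,
      fun hs hm => h1 ω hm hs (hq'ne ω hω).symm⟩⟩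

/-! ### The ascending auction -/

/-- The price at level `k` of the grid: `ε (k - M)`. -/
noncomputable def gridPrice (ε : ℝ) (M : ℕ) (k : Ω → ℕ) (ω : Ω) : ℝ := ε * ((k ω : ℝ) - M)

/-- The buyer of `ω` claims it: the price is not maximal, and it is minimal or the trade is
demanded. Here `a` are the buyers' price levels and `Θ` the demanded bundles. -/
def BuyerClaims (b : Ω → I) (M : ℕ) (a : Ω → ℕ) (Θ : I → Finset Ω) (ω : Ω) : Prop :=
  a ω < 2 * M ∧ (a ω = 0 ∨ ω ∈ Θ (b ω))

/-- The seller of `ω` claims it: the price is minimal or selling is not demanded. Here `c` are the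
sellers' price levels. -/
def SellerClaims (s : Ω → I) (c : Ω → ℕ) (Θ : I → Finset Ω) (ω : Ω) : Prop :=
  c ω = 0 ∨ ω ∉ Θ (s ω)

/-- The invariant of the auction with buyers' price levels `a`, sellers' price levels `c` and
demanded bundles `Θ`. -/
structure AuctionState (b s : Ω → I) (v : I → Finset Ω → EReal) (ε : ℝ) (M : ℕ)
    (a c : Ω → ℕ) (Θ : I → Finset Ω) : Prop where
  dem : ∀ i, Θ i ∈ demand b s v i (view b s (gridPrice ε M a) (gridPrice ε M c) i)
  le : ∀ ω, c ω ≤ a ω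
  le_succ : ∀ ω, a ω ≤ c ω + 1
  le_top : ∀ ω, a ω ≤ 2 * M
  lt_top : ∀ ω, c ω < 2 * M
  cover : ∀ ω, BuyerClaims b M a Θ ω ∨ SellerClaims s c Θ ω
  gap : ∀ ω, a ω = c ω + 1 → SellerClaims s c Θ ω

lemma view_raise_buyer (b s : Ω → I) (ε : ℝ) (M : ℕ) (a c : Ω → ℕ)
    (ω₀ : Ω) (i : I) :
    view b s (gridPrice ε M (Function.update a ω₀ (a ω₀ + 1))) (gridPrice ε M c) i =
      if b ω₀ = i then Function.update (view b s (gridPrice ε M a) (gridPrice ε M c) i) ω₀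
        (view b s (gridPrice ε M a) (gridPrice ε M c) i ω₀ + ε)
      else view b s (gridPrice ε M a) (gridPrice ε M c) i := by
  funext ω
  by_cases hω : ω = ω₀
  · subst hω
    by_cases h : b ω = i
    · simp [view, h, gridPrice]
      ring
    · simp [view, h]
  · by_cases h : b ω₀ = i <;> simp [view, h, hω, gridPrice]

lemma view_raise_seller (b s : Ω → I) (hbs : ∀ ω, b ω ≠ s ω) (ε : ℝ) (M : ℕ) (a c : Ω → ℕ)
    (ω₀ : Ω) (i : I) :
    view b s (gridPrice ε M a) (gridPrice ε M (Function.update c ω₀ (c ω₀ + 1))) i =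
      if s ω₀ = i then Function.update (view b s (gridPrice ε M a) (gridPrice ε M c) i) ω₀
        (view b s (gridPrice ε M a) (gridPrice ε M c) i ω₀ + ε)
      else view b s (gridPrice ε M a) (gridPrice ε M c) i := by
  funext ω
  by_cases hω : ω = ω₀
  · subst hω
    by_cases h : s ω = i
    · have h' : b ω ≠ i := fun h' => hbs ω (h'.trans h.symm)
      simp [view, h, h', gridPrice]
      ring
    · simp [view, h]
  · by_cases h : s ω₀ = i <;> simp [view, h, hω, gridPrice]

/-- While both sides claim some `ω₀`, the auction can raise its price for one side. -/
lemma auction_step (b s : Ω → I) (v : I → Finset Ω → EReal)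
    (hbs : ∀ ω, b ω ≠ s ω) (hv0 : ∀ i, v i ∅ = 0) (hvtop : ∀ i Ψ, v i Ψ ≠ ⊤)
    (hFS : ∀ i, FullySubstitutable b s v i) (ε : ℝ) (hε : 0 < ε) (M : ℕ)
    (a c : Ω → ℕ) (Θ : I → Finset Ω) (h : AuctionState b s v ε M a c Θ) (ω₀ : Ω)
    (hb : BuyerClaims b M a Θ ω₀) (hs : SellerClaims s c Θ ω₀) :
    ∃ a' c' Θ', AuctionState b s v ε M a' c' Θ' ∧
      ∑ ω, (a ω + c ω) < ∑ ω, (a' ω + c' ω) := by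
  have hsum : ∀ a' c' : Ω → ℕ, (∀ ω, a ω + c ω ≤ a' ω + c' ω) →
      a ω₀ + c ω₀ < a' ω₀ + c' ω₀ → ∑ ω, (a ω + c ω) < ∑ ω, (a' ω + c' ω) :=
    fun a' c' h1 h2 => Finset.sum_lt_sum (fun ω _ => h1 ω) ⟨ω₀, Finset.mem_univ _, h2⟩
  by_cases hac : a ω₀ = c ω₀
  · obtain ⟨Ψ, hΨ, hkeep⟩ := exists_demand_raise b s v hbs hv0 hvtop (b ω₀) (hFS _) _ ω₀ ε hε.le
      (Or.inl rfl) _ (h.dem (b ω₀))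
    have hs' : ∀ ω, SellerClaims s c Θ ω →
        SellerClaims s c (Function.update Θ (b ω₀) Ψ) ω := by
      rintro ω (h0 | h1)
      · exact Or.inl h0
      · by_cases hω : s ω = b ω₀
        · have hne : ω ≠ ω₀ := fun e => hbs ω₀ (e ▸ hω).symm
          refine Or.inr ?_
          rw [hω, Function.update_self]
          exact fun hm => h1 (hω ▸ (hkeep ω hne).2 hω hm)
        · refine Or.inr ?_
          rwa [Function.update_of_ne hω]
    have hb' : ∀ ω, ω ≠ ω₀ → BuyerClaims b M a Θ ω →
        BuyerClaims b M (Function.update a ω₀ (a ω₀ + 1)) (Function.update Θ (b ω₀) Ψ) ω := by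
      rintro ω hne ⟨h0, h1⟩
      refine ⟨by rwa [Function.update_of_ne hne], ?_⟩
      rw [Function.update_of_ne hne]
      refine h1.imp_right fun h1 => ?_
      by_cases hω : b ω = b ω₀
      · rw [hω, Function.update_self]
        exact (hkeep ω hne).1 hω (hω ▸ h1)
      · rwa [Function.update_of_ne hω]
    refine ⟨Function.update a ω₀ (a ω₀ + 1), c, Function.update Θ (b ω₀) Ψ, ?_, hsum _ _ ?_ ?_⟩
    · refine ⟨fun i => ?_, fun ω => ?_, fun ω => ?_, fun ω => ?_, h.lt_top, fun ω => ?_,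
        fun ω => ?_⟩
      · rw [view_raise_buyer]
        by_cases hi : b ω₀ = i
        · subst hi
          simpa using hΨ
        · rw [if_neg hi, Function.update_of_ne (Ne.symm hi)]
          exact h.dem i
      · by_cases hω : ω = ω₀
        · subst hω
          simp [hac]
        · simpa [hω] using h.le ω
      · by_cases hω : ω = ω₀
        · subst hω
          simp [hac]
        · simpa [hω] using h.le_succ ω
      · by_cases hω : ω = ω₀
        · subst hω
          simpa using hb.1
        · simpa [hω] using h.le_top ω
      · by_cases hω : ω = ω₀
        · subst hω
          exact Or.inr (hs' _ hs)
        · exact (h.cover ω).imp (hb' ω hω) (hs' ω)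
      · by_cases hω : ω = ω₀
        · subst hω
          exact fun _ => hs' _ hs
        · rw [Function.update_of_ne hω]
          exact fun hg => hs' ω (h.gap ω hg)
    · intro ω
      by_cases hω : ω = ω₀
      · subst hω
        simp
      · simp [hω]
    · simp
  · have hac : a ω₀ = c ω₀ + 1 := by
      have h1 := h.le ω₀
      have h2 := h.le_succ ω₀
      omega
    obtain ⟨Ψ, hΨ, hkeep⟩ := exists_demand_raise b s v hbs hv0 hvtop (s ω₀) (hFS _) _ ω₀ ε hε.le
      (Or.inr rfl) _ (h.dem (s ω₀))
    have hs' : ∀ ω, ω ≠ ω₀ → SellerClaims s c Θ ω →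
        SellerClaims s (Function.update c ω₀ (c ω₀ + 1)) (Function.update Θ (s ω₀) Ψ) ω := by
      intro ω hne h1
      unfold SellerClaims
      rw [Function.update_of_ne hne]
      refine h1.imp_right fun h1 => ?_
      by_cases hω : s ω = s ω₀
      · rw [hω, Function.update_self]
        exact fun hm => h1 (hω ▸ (hkeep ω hne).2 hω hm)
      · rwa [Function.update_of_ne hω]
    have hb' : ∀ ω, BuyerClaims b M a Θ ω →
        BuyerClaims b M a (Function.update Θ (s ω₀) Ψ) ω := by
      rintro ω ⟨h0, h1⟩
      refine ⟨h0, h1.imp_right fun h1 => ?_⟩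
      by_cases hω : b ω = s ω₀
      · have hne : ω ≠ ω₀ := fun e => hbs ω₀ (e ▸ hω)
        rw [hω, Function.update_self]
        exact (hkeep ω hne).1 hω (hω ▸ h1)
      · rwa [Function.update_of_ne hω]
    refine ⟨a, Function.update c ω₀ (c ω₀ + 1), Function.update Θ (s ω₀) Ψ, ?_, hsum _ _ ?_ ?_⟩
    · refine ⟨fun i => ?_, fun ω => ?_, fun ω => ?_, h.le_top, fun ω => ?_, fun ω => ?_,
        fun ω => ?_⟩
      · rw [view_raise_seller b s hbs]
        by_cases hi : s ω₀ = i
        · subst hi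
          simpa using hΨ
        · rw [if_neg hi, Function.update_of_ne (Ne.symm hi)]
          exact h.dem i
      · by_cases hω : ω = ω₀
        · subst hω
          simp [hac]
        · simpa [hω] using h.le ω
      · by_cases hω : ω = ω₀
        · subst hω
          simp [hac]
        · simpa [hω] using h.le_succ ω
      · by_cases hω : ω = ω₀
        · subst hω
          have := hb.1
          simp
          omega
        · simpa [hω] using h.lt_top ω
      · by_cases hω : ω = ω₀
        · subst hω
          exact Or.inl (hb' _ hb)
        · exact (h.cover ω).imp (hb' ω) (hs' ω hω)
      · by_cases hω : ω = ω₀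
        · subst hω
          simp [hac]
        · rw [Function.update_of_ne hω]
          exact fun hg => hs' ω hω (h.gap ω hg)
    · intro ω
      by_cases hω : ω = ω₀
      · subst hω
        simp
      · simp [hω]
    · simp

/-- The auction reaches a state in which no trade is claimed by both sides. -/
lemma exists_terminal (b s : Ω → I) (v : I → Finset Ω → EReal)
    (hbs : ∀ ω, b ω ≠ s ω) (hv0 : ∀ i, v i ∅ = 0) (hvtop : ∀ i Ψ, v i Ψ ≠ ⊤)
    (hFS : ∀ i, FullySubstitutable b s v i) (ε : ℝ) (hε : 0 < ε) (M : ℕ) (hM : 0 < M) :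
    ∃ a c Θ, AuctionState b s v ε M a c Θ ∧
      ∀ ω, ¬ (BuyerClaims b M a Θ ω ∧ SellerClaims s c Θ ω) := by
  by_contra! hcon
  have hgrow : ∀ n : ℕ, ∃ a c Θ, AuctionState b s v ε M a c Θ ∧ n ≤ ∑ ω, (a ω + c ω) := by
    intro n
    induction n with
    | zero =>
      choose Θ hΘ using fun i => demand_nonempty b s v i
        (view b s (gridPrice ε M fun _ => 0) (gridPrice ε M fun _ => 0) i)
      exact ⟨fun _ => 0, fun _ => 0, Θ, ⟨hΘ, by simp, by simp, by simp, by simpa using fun _ => hM,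
        fun ω => Or.inr (Or.inl rfl), fun ω _ => Or.inl rfl⟩, Nat.zero_le _⟩
    | succ n ih =>
      obtain ⟨a, c, Θ, hst, hn⟩ := ih
      obtain ⟨ω, hb, hs⟩ := hcon a c Θ hst
      obtain ⟨a', c', Θ', hst', hlt⟩ :=
        auction_step b s v hbs hv0 hvtop hFS ε hε M a c Θ hst ω hb hs
      exact ⟨a', c', Θ', hst', by omega⟩
  obtain ⟨a, c, Θ, hst, hn⟩ := hgrow (∑ _ω : Ω, (2 * M + 2 * M) + 1)
  have : ∑ ω, (a ω + c ω) ≤ ∑ _ω : Ω, (2 * M + 2 * M) :=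
    Finset.sum_le_sum fun ω _ => add_le_add (hst.le_top ω) (hst.lt_top ω).le
  omega

/-- The payments of all agents, collected trade by trade. -/
lemma sum_cost_view (b s : Ω → I) (hbs : ∀ ω, b ω ≠ s ω) (α β : Ω → ℝ) (Θ : I → Finset Ω) :
    ∑ i, cost b s i (Θ i) (view b s α β i) =
      ∑ ω, ((if ω ∈ Θ (b ω) then α ω else 0) - (if ω ∈ Θ (s ω) then β ω else 0)) := by
  have h1 : ∀ i, cost b s i (Θ i) (view b s α β i) =
      ∑ ω, ((if b ω = i then (if ω ∈ Θ i then α ω else 0) else 0) -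
        (if s ω = i then (if ω ∈ Θ i then β ω else 0) else 0)) := by
    intro i
    unfold cost
    rw [← Finset.univ_inter (Θ i), ← Finset.sum_ite_mem]
    refine Finset.sum_congr rfl fun ω _ => ?_
    by_cases hb : b ω = i
    · have hs : s ω ≠ i := fun hs => hbs ω (hb.trans hs.symm)
      simp [chi, view, hb, hs]
    · by_cases hs : s ω = i <;> simp [chi, view, hb, hs]
      split_ifs <;> simp
  simp only [h1]
  rw [Finset.sum_comm]
  refine Finset.sum_congr rfl fun ω _ => ?_
  rw [Finset.sum_sub_distrib]
  simp

/-- In a terminal state of an auction with a large price range, buyer and seller of each trade agree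
on whether to trade it. -/
lemma terminal_consistent (b s : Ω → I) (v : I → Finset Ω → EReal)
    (hbs : ∀ ω, b ω ≠ s ω) (hv0 : ∀ i, v i ∅ = 0) (hvtop : ∀ i Ψ, v i Ψ ≠ ⊤)
    (ε : ℝ) (hε : 0 < ε) (M : ℕ) (hM : 0 < M)
    (hbig : ∑ i, ∑ X, |(v i X).toReal| < ε * M)
    (a c : Ω → ℕ) (Θ : I → Finset Ω) (h : AuctionState b s v ε M a c Θ)
    (hterm : ∀ ω, ¬ (BuyerClaims b M a Θ ω ∧ SellerClaims s c Θ ω)) (ω : Ω) :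
    (ω ∈ Θ (b ω) ↔ ω ∈ Θ (s ω)) ∧ (ω ∈ Θ (b ω) → a ω = c ω) := by
  -- A trade contributes nothing to total payments if the two sides agree, and `ε M` otherwise.
  have hcase : ∀ ω, ((ω ∈ Θ (b ω) ↔ ω ∈ Θ (s ω)) ∧ (ω ∈ Θ (b ω) → a ω = c ω)) ∨
      ε * M = (if ω ∈ Θ (b ω) then gridPrice ε M a ω else 0) -
        (if ω ∈ Θ (s ω) then gridPrice ε M c ω else 0) := by
    intro ω
    have h1 := h.le ω
    have h2 := h.le_succ ω
    have h3 := h.le_top ω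
    have h4 := h.lt_top ω
    have h5 := h.cover ω
    have h6 := h.gap ω
    have h7 := hterm ω
    unfold BuyerClaims SellerClaims at *
    by_cases hb : ω ∈ Θ (b ω) <;> by_cases hs : ω ∈ Θ (s ω)
    · left
      simp only [hb, hs, not_true_eq_false, or_false, or_true, and_true] at h5 h6 h7
      exact ⟨by simp [hb, hs], fun _ => by omega⟩
    · right
      simp only [hb, hs, not_false_eq_true, or_true, and_true] at h7
      have : a ω = 2 * M := by omega
      simp only [hb, hs, gridPrice, this, if_true, if_false]
      push_cast
      ring
    · right
      simp only [hb, hs, not_true_eq_false, or_false] at h5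
      have : c ω = 0 := by omega
      simp [hb, hs, gridPrice, this]
    · left
      simp [hb, hs]
  refine (hcase ω).resolve_right fun hω => ?_
  have hterm0 : ∀ ω, 0 ≤ (if ω ∈ Θ (b ω) then gridPrice ε M a ω else 0) -
      (if ω ∈ Θ (s ω) then gridPrice ε M c ω else 0) := by
    intro ω
    rcases hcase ω with ⟨h1, h2⟩ | h1
    · by_cases hb : ω ∈ Θ (b ω)
      · simp [hb, h1.mp hb, gridPrice, h2 hb]
      · simp [hb, mt h1.mpr hb]
    · rw [← h1]
      positivity
  have hpay : ε * M ≤ ∑ i, cost b s i (Θ i)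
      (view b s (gridPrice ε M a) (gridPrice ε M c) i) := by
    rw [sum_cost_view b s hbs, hω]
    exact Finset.single_le_sum (f := fun ω => (if ω ∈ Θ (b ω) then gridPrice ε M a ω else 0) -
      (if ω ∈ Θ (s ω) then gridPrice ε M c ω else 0)) (fun ω _ => hterm0 ω) (Finset.mem_univ ω)
  have hle : ∑ i, cost b s i (Θ i) (view b s (gridPrice ε M a) (gridPrice ε M c) i) ≤
      ∑ i, ∑ X, |(v i X).toReal| := by
    refine Finset.sum_le_sum fun i _ => ?_
    have h1 := h.dem i
    rw [mem_demand_iff b s v hv0 hvtop] at h1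
    have h2 := h1.2.2 ∅ (Finset.empty_subset _) (by rw [hv0]; exact EReal.zero_ne_bot)
    simp only [hv0, EReal.toReal_zero] at h2
    have h3 : cost b s i ∅ (view b s (gridPrice ε M a) (gridPrice ε M c) i) = 0 := by simp [cost]
    have h4 : |(v i (Θ i)).toReal| ≤ ∑ X, |(v i X).toReal| :=
      Finset.single_le_sum (f := fun X => |(v i X).toReal|) (fun _ _ => abs_nonneg _)
        (Finset.mem_univ (Θ i))
    have h5 := le_abs_self (v i (Θ i)).toReal
    linarith
  linarith

/-- If the market admits a competitive equilibrium, then the trading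
network game admits an `ε`-tight Nash equilibrium; in particular this holds whenever
every agent's valuation is fully substitutable. -/
theorem exists_tight_nash_of_competitive_equilibrium
    (b s : Ω → I) (v : I → Finset Ω → EReal)
    (hbs : ∀ ω, b ω ≠ s ω) (hv0 : ∀ i, v i ∅ = 0) (hvtop : ∀ i Ψ, v i Ψ ≠ ⊤)
    (ε : ℝ) (hε : 0 < ε) :
    ((∃ (p : Ω → ℝ) (Φ : Finset Ω), IsCompetitiveEquilibrium b s v p Φ) →
      ∃ σ : I → Ω → ℝ, IsNashEquilibrium b s v σ ∧ IsTight b s σ ε) ∧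
    ((∀ i, FullySubstitutable b s v i) →
      ∃ σ : I → Ω → ℝ, IsNashEquilibrium b s v σ ∧ IsTight b s σ ε) := by
  constructor
  · rintro ⟨p, Φ, hCE⟩
    refine nash_of_spread b s v hbs hv0 hvtop ε hε p p Φ (fun i => ?_) (fun _ _ => rfl)
      (fun ω => by linarith)
    have hchi : ∀ ω, chi b s i ω * view b s p p i ω = chi b s i ω * p ω := by
      intro ω
      by_cases hb : b ω = i <;> by_cases hs : s ω = i <;> simp [chi, view, hb, hs]
    exact demand_of_cost_le b s v hv0 hvtop i p _ _ (hCE i) (fun ω _ => hchi ω)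
      (fun ω => (hchi ω).ge)
  · intro hFS
    obtain ⟨M, hM⟩ := exists_nat_gt ((∑ i, ∑ X, |(v i X).toReal|) / ε)
    have hbig : ∑ i, ∑ X, |(v i X).toReal| < ε * M := by
      rw [div_lt_iff₀ hε] at hM
      linarith
    have hM0 : 0 < M := by
      have : (0 : ℝ) < M := lt_of_le_of_lt (by positivity) hM
      exact_mod_cast this
    obtain ⟨a, c, Θ, hst, hterm⟩ := exists_terminal b s v hbs hv0 hvtop hFS ε hε M hM0
    have hcons := terminal_consistent b s v hbs hv0 hvtop ε hε M hM0 hbig a c Θ hst hterm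
    refine nash_of_spread b s v hbs hv0 hvtop ε hε (gridPrice ε M a) (gridPrice ε M c)
      (Finset.univ.filter fun ω => ω ∈ Θ (b ω)) (fun i => ?_) (fun ω hω => ?_) (fun ω => ?_)
    · have : (Finset.univ.filter fun ω => ω ∈ Θ (b ω)) ∩ tradesOf b s i = Θ i := by
        ext ω
        constructor
        · intro hω
          simp only [tradesOf, Finset.mem_inter, Finset.mem_filter, Finset.mem_univ,
            true_and] at hω
          obtain ⟨h1, rfl | rfl⟩ := hω
          · exact h1
          · exact (hcons ω).1.mp h1
        · intro hω
          have h1 := (hst.dem i).1 hω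
          refine Finset.mem_inter.mpr ⟨?_, h1⟩
          simp only [tradesOf, Finset.mem_filter, Finset.mem_univ, true_and] at h1 ⊢
          obtain rfl | rfl := h1
          · exact hω
          · exact (hcons ω).1.mpr hω
      rw [this]
      exact hst.dem i
    · simp only [Finset.mem_filter, Finset.mem_univ, true_and] at hω
      simp [gridPrice, (hcons ω).2 hω]
    · have h1 : (a ω : ℝ) ≤ c ω + 1 := by exact_mod_cast hst.le_succ ω
      have h2 := mul_le_mul_of_nonneg_left h1 hε.le
      simp only [gridPrice]
      linarith
end

section
/- Let σ be an ε-tight Nash equilibrium of the trading network game with outcome (p, Φ), and define q ∈ ℝ^Ω by q_ω = (σ^{b(ω)}_ω + σ^{s(ω)}_ω)/2 for every trade ω (so q_ω = p_ω for every active trade ω ∈ Φ). Then (q, Φ) is an εΔ-approximate competitive equilibrium, where Δ is the maximum vertex degree of the market. -/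
/-!
Fix an agent `i` and a bundle `Ψ ⊆ Ω_i`. Agent `i` can unilaterally realise exactly the bundle `Ψ`
by matching the counterparty's offer on the trades of `Ψ` and mismatching it on all others
(`payoff_deviation`), so in a Nash equilibrium her payoff is at least her utility for `Ψ` at the
counterparties' offers. By tightness each such offer differs from the midpoint price by at most
`ε / 2`, so passing to midpoint prices costs at most `|Ψ| ε / 2 ≤ ε Δ`. On active trades the
midpoint price is the transaction price, so the payoff of `i` is her utility at midpoint prices.
-/

open Finset

variable {I Ω : Type*} [Fintype I] [DecidableEq I] [Fintype Ω] [DecidableEq Ω]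

/-- `(p, Φ)` is an `ε'`-approximate competitive equilibrium. -/
noncomputable def IsApproxCompetitiveEquilibrium (b s : Ω → I) (v : I → Finset Ω → EReal)
    (ε' : ℝ) (p : Ω → ℝ) (Φ : Finset Ω) : Prop :=
  ∀ i : I, ∀ Ψ ⊆ tradesOf b s i,
    utility b s v i Ψ p - (ε' : EReal) ≤ utility b s v i (Φ ∩ tradesOf b s i) p

/-- The offer made on trade `ω` by the counterparty of agent `i`. -/
def counterOffer (b s : Ω → I) (σ : I → Ω → ℝ) (i : I) (ω : Ω) : ℝ :=
  if b ω = i then σ (s ω) ω else σ (b ω) ω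

/-- Offers of agent `i` that activate exactly the trades of `Ψ` among those involving `i`. -/
noncomputable def deviation (b s : Ω → I) (σ : I → Ω → ℝ) (i : I) (Ψ : Finset Ω) (ω : Ω) : ℝ :=
  if ω ∈ Ψ then counterOffer b s σ i ω else counterOffer b s σ i ω + 1

theorem activeTrades_deviation (b s : Ω → I) (hbs : ∀ ω, b ω ≠ s ω) (σ : I → Ω → ℝ) (i : I)
    (Ψ : Finset Ω) (hΨ : Ψ ⊆ tradesOf b s i) :
    activeTrades b s (Function.update σ i (deviation b s σ i Ψ)) ∩ tradesOf b s i = Ψ := by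
  ext ω
  have hΨω := @hΨ ω
  have hne := hbs ω
  simp only [activeTrades, tradesOf, Finset.mem_inter, Finset.mem_filter, Finset.mem_univ,
    true_and, Function.update_apply] at hΨω ⊢
  by_cases hb : b ω = i
  · have hs : s ω ≠ i := fun h => hne (hb.trans h.symm)
    by_cases hω : ω ∈ Ψ <;> simp [deviation, counterOffer, hb, hs, hω]
  · by_cases hs : s ω = i
    · by_cases hω : ω ∈ Ψ <;> simp [deviation, counterOffer, hb, hs, hω]
    · simp only [hb, hs, or_self, and_false, false_iff]
      exact fun h => (hΨω h).elim hb hs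

/-- Only prices on the bundle itself matter for the utility. -/
theorem utility_congr (b s : Ω → I) (v : I → Finset Ω → EReal) (i : I) (Ψ : Finset Ω)
    {p q : Ω → ℝ} (h : ∀ ω ∈ Ψ, p ω = q ω) : utility b s v i Ψ p = utility b s v i Ψ q := by
  unfold utility
  rw [Finset.sum_congr rfl fun ω hω => by rw [h ω hω]]

theorem payoff_deviation (b s : Ω → I) (v : I → Finset Ω → EReal) (hbs : ∀ ω, b ω ≠ s ω)
    (σ : I → Ω → ℝ) (i : I) (Ψ : Finset Ω) (hΨ : Ψ ⊆ tradesOf b s i) :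
    payoff b s v (Function.update σ i (deviation b s σ i Ψ)) i =
      utility b s v i Ψ (counterOffer b s σ i) := by
  unfold payoff
  rw [activeTrades_deviation b s hbs σ i Ψ hΨ]
  refine utility_congr b s v i Ψ fun ω hω => ?_
  by_cases hb : b ω = i <;>
    simp [deviation, counterOffer, hb, hω]

/-- The total cost of `Ψ` at the counterparties' offers exceeds that at midpoint prices by at most
`ε Δ`. -/
theorem cost_counterOffer_le (b s : Ω → I) (ε : ℝ) (σ : I → Ω → ℝ) (hT : IsTight b s σ ε) (i : I)
    (Ψ : Finset Ω) (hΨ : Ψ ⊆ tradesOf b s i) :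
    ∑ ω ∈ Ψ, chi b s i ω * counterOffer b s σ i ω ≤
      ∑ ω ∈ Ψ, chi b s i ω * ((σ (b ω) ω + σ (s ω) ω) / 2) + ε * (maxDegree b s : ℝ) := by
  have hterm : ∀ ω ∈ Ψ, chi b s i ω * counterOffer b s σ i ω ≤
      chi b s i ω * ((σ (b ω) ω + σ (s ω) ω) / 2) + ε := by
    intro ω _
    have h0 : 0 ≤ ε := (abs_nonneg _).trans (hT ω)
    have h := abs_le.mp (hT ω)
    unfold chi counterOffer
    split_ifs <;> linarith
  have hcard : (Ψ.card : ℝ) ≤ maxDegree b s := by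
    have h : (tradesOf b s i).card ≤ maxDegree b s :=
      Finset.le_sup (f := fun i => (tradesOf b s i).card) (Finset.mem_univ i)
    exact_mod_cast (Finset.card_le_card hΨ).trans h
  -- Tightness forces `0 ≤ ε` only if there is a trade; without trades `Δ = 0`.
  have hε : (Ψ.card : ℝ) * ε ≤ ε * maxDegree b s := by
    rcases isEmpty_or_nonempty Ω with hΩ | ⟨⟨ω⟩⟩
    · have h1 : Ψ = ∅ := Finset.eq_empty_of_isEmpty Ψ
      have h2 : maxDegree b s = 0 := by
        simp [maxDegree, Finset.eq_empty_of_isEmpty (tradesOf b s _)]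
      simp [h1, h2]
    · have h0 : 0 ≤ ε := (abs_nonneg _).trans (hT ω)
      rw [mul_comm]
      exact mul_le_mul_of_nonneg_left hcard h0
  calc _ ≤ ∑ ω ∈ Ψ, (chi b s i ω * ((σ (b ω) ω + σ (s ω) ω) / 2) + ε) := Finset.sum_le_sum hterm
    _ = ∑ ω ∈ Ψ, chi b s i ω * ((σ (b ω) ω + σ (s ω) ω) / 2) + Ψ.card * ε := by
      rw [Finset.sum_add_distrib, Finset.sum_const, nsmul_eq_mul]
    _ ≤ _ := by linarith

/-- The outcome of an `ε`-tight Nash equilibrium, with midpoint prices on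
all trades, is an `εΔ`-approximate competitive equilibrium. -/
theorem tight_nash_is_approx_competitive_equilibrium
    (b s : Ω → I) (v : I → Finset Ω → EReal)
    (hbs : ∀ ω, b ω ≠ s ω) (hv0 : ∀ i, v i ∅ = 0) (hvtop : ∀ i Ψ, v i Ψ ≠ ⊤)
    (ε : ℝ) (σ : I → Ω → ℝ)
    (hNE : IsNashEquilibrium b s v σ) (hT : IsTight b s σ ε) :
    IsApproxCompetitiveEquilibrium b s v (ε * (maxDegree b s : ℝ))
      (fun ω => (σ (b ω) ω + σ (s ω) ω) / 2) (activeTrades b s σ) := by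
  intro i Ψ hΨ
  have hNash := hNE i (deviation b s σ i Ψ)
  rw [payoff_deviation b s v hbs σ i Ψ hΨ] at hNash
  have hΦ : payoff b s v σ i = utility b s v i (activeTrades b s σ ∩ tradesOf b s i)
      (fun ω => (σ (b ω) ω + σ (s ω) ω) / 2) := by
    refine utility_congr b s v i _ fun ω hω => ?_
    have h : σ (b ω) ω = σ (s ω) ω := by
      simpa [activeTrades] using (Finset.mem_inter.mp hω).1
    linarith
  rw [← hΦ]
  refine le_trans ?_ hNash
  have hcost := cost_counterOffer_le b s ε σ hT i Ψ hΨ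
  unfold utility
  generalize hx : v i Ψ = x
  induction x with
  | bot => simp
  | top => exact absurd hx (hvtop i Ψ)
  | coe x =>
    norm_cast
    linarith
end

section
/- Fix a trading network market in which every agent's valuation is fully substitutable. For any efficient set of trades Φ ⊆ Ω and any core imputation x ∈ ℝ^I, there exist prices p ∈ ℝ^Φ such that (p, Φ) is a core outcome and u^i(Φ ∩ Ω_i, p) = x_i for every agent i ∈ I. -/
/-!
The argument only uses transfers. Put `t i = v i (Φ ∩ Ω_i) - x i`, the net amount agent `i` has to
pay; prices on `Φ` realizing `x` are exactly the solutions `p` of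
`∑ ω ∈ Φ ∩ Ω_i, χ^i_ω p_ω = t i`, a divergence equation on the graph with vertex set `I` and edge
set `Φ`. By linear duality it is solvable iff `∑ i, y i * t i = 0` for every potential `y` that
takes equal values at the two ends of each trade in `Φ` (`exists_divergence_eq`). Each level set `C`
of such a `y` is closed under `Φ`, so `∑ i ∈ C, v i (Φ ∩ Ω_i) ≤ w(C) ≤ ∑ i ∈ C, x i`; the same holds
for the complement of `C`, and the two inequalities add up to the equality `w(I) = ∑ i, x i`, hence
`t` sums to `0` over `C` (`sum_eq_of_closed`).

An outcome with utilities `x` is automatically in the core: prices cancel among the agents `C`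
involved in a blocking set of trades `Ψ`, so blocking would give `w(C) > ∑ i ∈ C, x i`.
-/

open Finset

variable {I Ω : Type*} [Fintype I] [DecidableEq I] [Fintype Ω] [DecidableEq Ω]

theorem sum_eq_bot_of_mem {ι : Type*} [DecidableEq ι] (A : Finset ι) (f : ι → EReal) (i : ι)
    (hi : i ∈ A) (hf : f i = ⊥) : ∑ j ∈ A, f j = ⊥ := by
  rw [← Finset.add_sum_erase A f hi, hf, EReal.bot_add]

theorem coe_finset_sum {ι : Type*} (A : Finset ι) (f : ι → ℝ) :
    ((∑ j ∈ A, f j : ℝ) : EReal) = ∑ j ∈ A, (f j : EReal) := by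
  classical
  induction A using Finset.induction_on with
  | empty => simp
  | insert a A ha ih => rw [Finset.sum_insert ha, Finset.sum_insert ha, EReal.coe_add, ih]

theorem chi_eq_zero (b s : Ω → I) (i : I) (ω : Ω) (h : ω ∉ tradesOf b s i) :
    chi b s i ω = 0 := by
  simp only [tradesOf, Finset.mem_filter, Finset.mem_univ, true_and, not_or] at h
  simp [chi, h.1, h.2]

theorem sum_inter_tradesOf (b s : Ω → I) (i : I) (Ψ : Finset Ω) (p : Ω → ℝ) :
    ∑ ω ∈ Ψ ∩ tradesOf b s i, chi b s i ω * p ω = ∑ ω ∈ Ψ, chi b s i ω * p ω := by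
  refine Finset.sum_subset Finset.inter_subset_left fun ω hω hn => ?_
  rw [chi_eq_zero b s i ω fun h => hn (Finset.mem_inter.2 ⟨hω, h⟩), zero_mul]

/-- `χ_ω` is the signed incidence vector of `ω`, so it pairs with `y` to a difference. -/
theorem sum_chi_mul (b s : Ω → I) (ω : Ω) (hbs : b ω ≠ s ω) (y : I → ℝ) :
    ∑ i, chi b s i ω * y i = y (b ω) - y (s ω) := by
  have h : ∀ i, chi b s i ω * y i =
      (if b ω = i then y i else 0) - (if s ω = i then y i else 0) := by
    intro i
    unfold chi
    by_cases h1 : b ω = i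
    · have h2 : s ω ≠ i := fun h2 => hbs (h1.trans h2.symm)
      simp [h1, h2]
    · by_cases h2 : s ω = i <;> simp [h1, h2]
  simp [h, Finset.sum_sub_distrib]

/-- Prices cancel over any coalition containing both parties of every trade in `Ψ`. -/
theorem sum_transfers_eq_zero (b s : Ω → I) (hbs : ∀ ω, b ω ≠ s ω) (Ψ : Finset Ω)
    (C : Finset I) (hC : ∀ ω ∈ Ψ, b ω ∈ C ∧ s ω ∈ C) (q : Ω → ℝ) :
    ∑ i ∈ C, ∑ ω ∈ Ψ ∩ tradesOf b s i, chi b s i ω * q ω = 0 := by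
  simp only [sum_inter_tradesOf]
  rw [Finset.sum_comm]
  refine Finset.sum_eq_zero fun ω hω => ?_
  have h := sum_chi_mul b s ω (hbs ω) (fun i => if i ∈ C then q ω else 0)
  simpa [(hC ω hω).1, (hC ω hω).2] using h

/-- Solvability of the divergence equation on the graph `(I, Φ)`, by duality in `I → ℝ`. -/
theorem exists_divergence_eq (b s : Ω → I) (hbs : ∀ ω, b ω ≠ s ω) (Φ : Finset Ω) (t : I → ℝ)
    (ht : ∀ y : I → ℝ, (∀ ω ∈ Φ, y (b ω) = y (s ω)) → ∑ i, y i * t i = 0) :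
    ∃ p : Ω → ℝ, ∀ i, ∑ ω ∈ Φ, chi b s i ω * p ω = t i := by
  let S : Submodule ℝ (I → ℝ) :=
    LinearMap.range (Fintype.linearCombination ℝ
      (fun ω => if ω ∈ Φ then (fun i => chi b s i ω) else (0 : I → ℝ)))
  by_cases hS : t ∈ S
  · obtain ⟨p, hp⟩ := hS
    refine ⟨p, fun i => ?_⟩
    rw [← hp, Fintype.linearCombination_apply, Finset.sum_apply]
    have h : ∀ ω, (p ω • (if ω ∈ Φ then (fun i => chi b s i ω) else (0 : I → ℝ))) i =
        if ω ∈ Φ then chi b s i ω * p ω else 0 := by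
      intro ω
      by_cases hω : ω ∈ Φ <;> simp [hω, mul_comm]
    simp [h]
  · exfalso
    obtain ⟨f, hft, hf⟩ := Submodule.exists_le_ker_of_notMem hS
    -- `y` represents the functional `f` in the standard basis.
    let y : I → ℝ := fun i => f (Pi.single i 1)
    have hfy : ∀ z : I → ℝ, f z = ∑ i, z i * y i := by
      intro z
      rw [LinearMap.pi_apply_eq_sum_univ f z]
      refine Finset.sum_congr rfl fun i _ => ?_
      simp only [smul_eq_mul, y]
      congr 2
      ext j
      simp [Pi.single_apply, eq_comm]
    apply hft
    rw [hfy]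
    simp only [mul_comm (t _)]
    refine ht y fun ω hω => ?_
    have hmem : (fun i => chi b s i ω) ∈ S := by
      refine ⟨Pi.single ω 1, ?_⟩
      rw [Fintype.linearCombination_apply_single]
      simp [hω]
    have h0 : f (fun i => chi b s i ω) = 0 := hf hmem
    rw [hfy, sum_chi_mul b s ω (hbs ω)] at h0
    linarith

theorem sum_le_coalitionValue (b s : Ω → I) (v : I → Finset Ω → EReal) (C : Finset I)
    (Ψ : Finset Ω) (hΨ : ∀ ω ∈ Ψ, b ω ∈ C ∧ s ω ∈ C) :
    ∑ i ∈ C, v i (Ψ ∩ tradesOf b s i) ≤ coalitionValue b s v C := by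
  unfold coalitionValue
  refine Finset.le_sup' (fun Φ => ∑ i ∈ C, v i (Φ ∩ tradesOf b s i)) ?_
  rw [Finset.mem_powerset]
  intro ω hω
  simpa [coalitionTrades] using hΨ ω hω

/-- A coalition that no trade of `Φ` leaves can realize its part of `Φ` on its own. -/
theorem sum_le_of_closed (b s : Ω → I) (v : I → Finset Ω → EReal) (Φ : Finset Ω)
    (x : I → ℝ) (hx : IsCoreImputation b s v x) (a : I → ℝ)
    (ha : ∀ i, v i (Φ ∩ tradesOf b s i) = (a i : EReal))
    (C : Finset I) (hC : ∀ ω ∈ Φ, b ω ∈ C ↔ s ω ∈ C) :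
    ∑ i ∈ C, a i ≤ ∑ i ∈ C, x i := by
  have h := sum_le_coalitionValue b s v C (Φ ∩ coalitionTrades b s C) (by
    intro ω hω
    simpa [coalitionTrades] using (Finset.mem_inter.1 hω).2)
  have h2 : ∑ i ∈ C, v i (Φ ∩ coalitionTrades b s C ∩ tradesOf b s i) =
      ((∑ i ∈ C, a i : ℝ) : EReal) := by
    rw [coe_finset_sum]
    refine Finset.sum_congr rfl fun i hi => ?_
    rw [← ha i]
    congr 1
    ext ω
    simp only [Finset.mem_inter, coalitionTrades, tradesOf, Finset.mem_filter, Finset.mem_univ,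
      true_and]
    constructor
    · rintro ⟨⟨h1, -⟩, h2⟩
      exact ⟨h1, h2⟩
    · rintro ⟨h1, h2⟩
      have := hC ω h1
      refine ⟨⟨h1, ?_⟩, h2⟩
      rcases h2 with h2 | h2 <;> rw [h2] at this ⊢ <;> tauto
  rw [h2] at h
  exact EReal.coe_le_coe_iff.1 (h.trans (hx.2.2 C))

theorem sum_eq_of_closed (b s : Ω → I) (v : I → Finset Ω → EReal) (Φ : Finset Ω)
    (x : I → ℝ) (hx : IsCoreImputation b s v x) (a : I → ℝ)
    (ha : ∀ i, v i (Φ ∩ tradesOf b s i) = (a i : EReal)) (hsum : ∑ i, a i = ∑ i, x i)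
    (C : Finset I) (hC : ∀ ω ∈ Φ, b ω ∈ C ↔ s ω ∈ C) :
    ∑ i ∈ C, a i = ∑ i ∈ C, x i := by
  have h1 := sum_le_of_closed b s v Φ x hx a ha C hC
  have h2 := sum_le_of_closed b s v Φ x hx a ha Cᶜ (fun ω hω => by simp [hC ω hω])
  have h3 := Finset.sum_add_sum_compl C a
  have h4 := Finset.sum_add_sum_compl C x
  linarith

theorem isCoreOutcome_of_utility_eq (b s : Ω → I) (v : I → Finset Ω → EReal)
    (hbs : ∀ ω, b ω ≠ s ω) (hvtop : ∀ i Ψ, v i Ψ ≠ ⊤) (Φ : Finset Ω) (x : I → ℝ)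
    (hx : IsCoreImputation b s v x) (p : Ω → ℝ)
    (hp : ∀ i : I, utility b s v i (Φ ∩ tradesOf b s i) p = ((x i : ℝ) : EReal)) :
    IsCoreOutcome b s v p Φ := by
  rintro ⟨q, Ψ, hle, j, hj, hlt⟩
  simp only [hp] at hle hlt
  set C := involvedAgents b s Ψ with hCdef
  have hC : ∀ ω ∈ Ψ, b ω ∈ C ∧ s ω ∈ C := by
    intro ω hω
    constructor <;>
    · simp only [hCdef, involvedAgents, Finset.mem_filter, Finset.mem_univ, true_and]
      exact ⟨ω, by simp [hω, tradesOf]⟩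
  -- Involved agents weakly gain on the real number `x i`, so their bundle has a finite value.
  have hval : ∀ i ∈ C, v i (Ψ ∩ tradesOf b s i) =
      ((v i (Ψ ∩ tradesOf b s i)).toReal : EReal) := by
    intro i hi
    refine (EReal.coe_toReal (hvtop _ _) fun hb => ?_).symm
    have h := hle i hi
    unfold utility at h
    rw [hb, EReal.bot_sub, le_bot_iff] at h
    exact EReal.coe_ne_bot _ h
  set a : I → ℝ := fun i => (v i (Ψ ∩ tradesOf b s i)).toReal with hadef
  have hu : ∀ i ∈ C, utility b s v i (Ψ ∩ tradesOf b s i) q =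
      ((a i - ∑ ω ∈ Ψ ∩ tradesOf b s i, chi b s i ω * q ω : ℝ) : EReal) := by
    intro i hi
    unfold utility
    rw [hval i hi, ← EReal.coe_sub]
  have hsum : ∑ i ∈ C, x i <
      ∑ i ∈ C, (a i - ∑ ω ∈ Ψ ∩ tradesOf b s i, chi b s i ω * q ω) := by
    refine Finset.sum_lt_sum (fun i hi => ?_) ⟨j, hj, ?_⟩
    · have h := hle i hi
      rw [hu i hi] at h
      exact EReal.coe_le_coe_iff.1 h
    · rw [hu j hj] at hlt
      exact EReal.coe_lt_coe_iff.1 hlt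
  rw [Finset.sum_sub_distrib, sum_transfers_eq_zero b s hbs Ψ C hC q, sub_zero] at hsum
  have hw := (sum_le_coalitionValue b s v C Ψ hC).trans (hx.2.2 C)
  rw [Finset.sum_congr rfl hval, ← coe_finset_sum] at hw
  exact absurd (EReal.coe_le_coe_iff.1 hw) (not_le.2 hsum)

/-- In a fully substitutable market, any core imputation can be implemented
by prices on any efficient set of trades as a core outcome. -/
theorem core_imputation_implementation
    (b s : Ω → I) (v : I → Finset Ω → EReal)
    (hbs : ∀ ω, b ω ≠ s ω) (hv0 : ∀ i, v i ∅ = 0) (hvtop : ∀ i Ψ, v i Ψ ≠ ⊤)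
    (hFS : ∀ i, FullySubstitutable b s v i)
    (Φ : Finset Ω) (hΦ : IsEfficient b s v Φ)
    (x : I → ℝ) (hx : IsCoreImputation b s v x) :
    ∃ p : Ω → ℝ, IsCoreOutcome b s v p Φ ∧
      ∀ i : I, utility b s v i (Φ ∩ tradesOf b s i) p = ((x i : ℝ) : EReal) := by
  have htot : ∑ i, v i (Φ ∩ tradesOf b s i) = ((∑ i, x i : ℝ) : EReal) := hΦ.trans hx.2.1.symm
  obtain ⟨a, ha⟩ : ∃ a : I → ℝ, ∀ i, v i (Φ ∩ tradesOf b s i) = (a i : EReal) := by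
    refine ⟨fun i => (v i (Φ ∩ tradesOf b s i)).toReal, fun i => ?_⟩
    refine (EReal.coe_toReal (hvtop _ _) fun hb => ?_).symm
    rw [sum_eq_bot_of_mem _ _ i (Finset.mem_univ i) hb] at htot
    exact EReal.coe_ne_bot _ htot.symm
  have hsum : ∑ i, a i = ∑ i, x i := by
    simp only [ha] at htot
    rw [← coe_finset_sum] at htot
    exact EReal.coe_eq_coe_iff.1 htot
  obtain ⟨p, hp⟩ := exists_divergence_eq b s hbs Φ (fun i => a i - x i) (by
    intro y hy
    -- Group the agents by their potential; each level set is closed under `Φ`.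
    rw [← Finset.sum_fiberwise_of_maps_to (g := y) (t := Finset.univ.image y)
      (fun i _ => Finset.mem_image_of_mem y (Finset.mem_univ i))]
    refine Finset.sum_eq_zero fun c _ => ?_
    have hc := sum_eq_of_closed b s v Φ x hx a ha hsum (Finset.univ.filter fun i => y i = c)
      (fun ω hω => by simp [hy ω hω])
    have h : ∑ i ∈ Finset.univ.filter (fun i => y i = c), y i * (a i - x i) =
        c * ∑ i ∈ Finset.univ.filter (fun i => y i = c), (a i - x i) := by
      rw [Finset.mul_sum]
      refine Finset.sum_congr rfl fun i hi => ?_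
      rw [(Finset.mem_filter.1 hi).2]
    rw [h, Finset.sum_sub_distrib, hc, sub_self, mul_zero])
  have hu : ∀ i : I, utility b s v i (Φ ∩ tradesOf b s i) p = ((x i : ℝ) : EReal) := by
    intro i
    unfold utility
    rw [ha i, sum_inter_tradesOf, hp i, ← EReal.coe_sub]
    congr 1
    ring
  exact ⟨p, isCoreOutcome_of_utility_eq b s v hbs hvtop Φ x hx p hu, hu⟩
end

section
/- Fix a trading network market with positive market value w(I) > 0. If the market admits at least one core imputation, then the market has at least one essential agent. -/
/-!
If an agent `i` is inessential, some efficient set of trades avoids `i`, so the coalition of all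
agents other than `i` already attains the market value. A core imputation must give that coalition
at least this much, which leaves at most `0` for `i`
(`IsCoreImputation.nonpos_of_not_isEssential`). If every agent were inessential, the shares would
sum to at most `0`, contradicting the positivity of the market value.
-/

open Finset

variable {I Ω : Type*} [Fintype I] [DecidableEq I] [Fintype Ω] [DecidableEq Ω]

/-- An agent untouched by some efficient `Φ` gets at most `0` in every core imputation: the
coalition of all other agents can carry out `Φ`, so it is worth at least the market value. -/
lemma IsCoreImputation.nonpos_of_not_isEssential {b s : Ω → I} {v : I → Finset Ω → EReal}
    (hv0 : ∀ i, v i ∅ = 0) {x : I → ℝ} (hx : IsCoreImputation b s v x) {i : I}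
    (hi : ¬ IsEssential b s v i) : x i ≤ 0 := by
  obtain ⟨-, hsum, hC⟩ := hx
  unfold IsEssential at hi
  push Not at hi
  obtain ⟨Φ, hΦ, hempty⟩ := hi
  have hmem : Φ ∈ (coalitionTrades b s (univ.erase i)).powerset := by
    rw [mem_powerset]
    intro ω hω
    have hnot : ω ∉ Φ ∩ tradesOf b s i := by simp [hempty]
    simp only [mem_inter, tradesOf, mem_filter, mem_univ, true_and, not_and, not_or] at hnot
    simpa [coalitionTrades] using hnot hω
  have hle : ∑ j ∈ univ.erase i, v j (Φ ∩ tradesOf b s j) ≤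
      coalitionValue b s v (univ.erase i) :=
    le_sup' (fun Φ => ∑ j ∈ univ.erase i, v j (Φ ∩ tradesOf b s j)) hmem
  have herase : ∑ j ∈ univ.erase i, v j (Φ ∩ tradesOf b s j) =
      ∑ j, v j (Φ ∩ tradesOf b s j) :=
    sum_erase _ (by rw [hempty, hv0])
  have hreal : ((∑ j, x j : ℝ) : EReal) ≤ ((∑ j ∈ univ.erase i, x j : ℝ) : EReal) := by
    rw [hsum, ← hΦ, ← herase]
    exact hle.trans (hC _)
  rw [EReal.coe_le_coe_iff, ← add_sum_erase univ x (mem_univ i)] at hreal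
  linarith

/-- If the market value is positive and a core imputation exists, then the
market has at least one essential agent. -/
theorem exists_essential_agent_of_core_nonempty
    (b s : Ω → I) (v : I → Finset Ω → EReal)
    (hbs : ∀ ω, b ω ≠ s ω) (hv0 : ∀ i, v i ∅ = 0) (hvtop : ∀ i Ψ, v i Ψ ≠ ⊤)
    (hpos : 0 < coalitionValue b s v Finset.univ)
    (hcore : ∃ x : I → ℝ, IsCoreImputation b s v x) :
    ∃ i : I, IsEssential b s v i := by
  obtain ⟨x, hx⟩ := hcore
  by_contra! hne
  have hle : ∑ i, x i ≤ 0 :=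
    sum_nonpos fun i _ => hx.nonpos_of_not_isEssential hv0 (hne i)
  rw [← hx.2.1] at hpos
  exact absurd (EReal.coe_pos.mp hpos) hle.not_gt
end

section
/- Fix a trading network market with at most three essential agents whose set of core imputations is non-empty. If x is a leximin core imputation, y is a leximax core imputation, and z is a minvar core imputation, then x = y = z. -/
/-!
Every inessential agent receives `0` in every core imputation, because the other agents can realise
the market value without it. With at most three essential agents, a core inequality therefore bounds,
from below or (after complementing the coalition) from above, the payoff of a single agent. So the
core is the intersection of a box with a hyperplane of constant sum, and it has the exchange property
`IsCoreImputation.transfer`: if `x` and `y` are core imputations with `y i < x i` and `x j < y j`,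
then moving a small amount from `i` to `j` in `x` stays in the core.

Moving a small amount from a richer to a poorer agent strictly improves each of the three criteria.
Hence each of the three optima is *transfer-stable*: no core-preserving transfer from a richer to a
poorer agent exists. There is only one transfer-stable core imputation: if `x ≠ y` were two of
them, pick `i`, `j` with `y i < x i` and `x j < y j`; by exchange and stability
`x i ≤ x j < y j ≤ y i < x i`, a contradiction.
-/

open Finset

variable {I Ω : Type*} [Fintype I] [DecidableEq I] [Fintype Ω] [DecidableEq Ω]

/-- The entries of `x` as a list sorted in ascending order. -/
noncomputable def ascList (x : I → ℝ) : List ℝ :=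
  (Finset.univ.val.map x).sort (· ≤ ·)

/-- The entries of `x` as a list sorted in descending order. -/
noncomputable def descList (x : I → ℝ) : List ℝ :=
  (ascList x).reverse

/-- Lexicographic order on lists of reals: `l₁ ⪯_L l₂` iff they are equal or, at the first
index where they differ, `l₁` is smaller. -/
def lexLE (l₁ l₂ : List ℝ) : Prop :=
  l₁ = l₂ ∨ List.Lex (· < ·) l₁ l₂

/-- `x` is a leximin core imputation. -/
noncomputable def IsLeximinCore (b s : Ω → I) (v : I → Finset Ω → EReal) (x : I → ℝ) : Prop :=
  IsCoreImputation b s v x ∧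
    ∀ y : I → ℝ, IsCoreImputation b s v y → lexLE (ascList y) (ascList x)

/-- `x` is a leximax core imputation. -/
noncomputable def IsLeximaxCore (b s : Ω → I) (v : I → Finset Ω → EReal) (x : I → ℝ) : Prop :=
  IsCoreImputation b s v x ∧
    ∀ y : I → ℝ, IsCoreImputation b s v y → lexLE (descList x) (descList y)

/-- Sum of squared deviations from the mean `m = w(I)/|I|`. -/
noncomputable def sqDev (b s : Ω → I) (v : I → Finset Ω → EReal) (x : I → ℝ) : ℝ :=
  ∑ i, (x i - (coalitionValue b s v Finset.univ).toReal / (Fintype.card I : ℝ)) ^ 2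

/-- `x` is a minimum-variance core imputation. -/
noncomputable def IsMinvarCore (b s : Ω → I) (v : I → Finset Ω → EReal) (x : I → ℝ) : Prop :=
  IsCoreImputation b s v x ∧
    ∀ y : I → ℝ, IsCoreImputation b s v y → sqDev b s v x ≤ sqDev b s v y

/-! ### Lexicographic comparison of sorted lists -/

/-- Two multisets that differ by replacing `a, b` with `c, d`, where `a` comes no later than
`b` and strictly before `c` and `d`: their sorted lists first differ at an entry that equals `a` in
the one and is strictly later than `a` in the other. -/
lemma exists_first_diff (r : ℝ → ℝ → Prop) [DecidableRel r] [IsTrans ℝ r] [Std.Antisymm r]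
    [Std.Total r] (a b c d : ℝ) (hab : r a b) (hac : r a c) (hac' : a ≠ c) (had : r a d)
    (had' : a ≠ d) (R : Multiset ℝ) :
    ∃ (p : List ℝ) (e : ℝ) (t₁ t₂ : List ℝ), r a e ∧ a ≠ e ∧
      (a ::ₘ b ::ₘ R).sort r = p ++ a :: t₁ ∧ (c ::ₘ d ::ₘ R).sort r = p ++ e :: t₂ := by
  -- If everything in `S` comes strictly after `a`, the lists differ in their first entry.
  have base : ∀ S : Multiset ℝ, (∀ m ∈ S, r a m ∧ a ≠ m) →
      ∃ (p : List ℝ) (e : ℝ) (t₁ t₂ : List ℝ), r a e ∧ a ≠ e ∧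
      (a ::ₘ b ::ₘ S).sort r = p ++ a :: t₁ ∧ (c ::ₘ d ::ₘ S).sort r = p ++ e :: t₂ := by
    intro S hS
    have h1 : (a ::ₘ b ::ₘ S).sort r = a :: (b ::ₘ S).sort r := by
      apply Multiset.sort_cons
      intro m hm
      rcases Multiset.mem_cons.1 hm with rfl | hm
      · exact hab
      · exact (hS m hm).1
    cases h : (c ::ₘ d ::ₘ S).sort r with
    | nil =>
      have := congrArg List.length h
      simp at this
    | cons e t =>
      have he : e ∈ c ::ₘ d ::ₘ S := by
        rw [← Multiset.mem_sort (r := r), h]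
        simp
      refine ⟨[], e, _, t, ?_, ?_, h1, rfl⟩
      · simp only [Multiset.mem_cons] at he
        rcases he with rfl | rfl | he
        exacts [hac, had, (hS _ he).1]
      · simp only [Multiset.mem_cons] at he
        rcases he with rfl | rfl | he
        exacts [hac', had', (hS _ he).2]
  obtain ⟨L, hL, rfl⟩ : ∃ L : List ℝ, L.Pairwise r ∧ (L : Multiset ℝ) = R :=
    ⟨R.sort r, Multiset.pairwise_sort _ _, Multiset.sort_eq _ _⟩
  induction L with
  | nil => exact base _ (by simp)
  | cons m L ih =>
    rw [List.pairwise_cons] at hL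
    by_cases hma : r m a
    · -- `m` is the first entry of both lists.
      obtain ⟨p, e, t₁, t₂, h1, h2, h3, h4⟩ := ih hL.2
      have key : ∀ u w : ℝ, r m u → r m w →
          (u ::ₘ w ::ₘ ((m :: L : List ℝ) : Multiset ℝ)).sort r
            = m :: (u ::ₘ w ::ₘ (L : Multiset ℝ)).sort r := by
        intro u w hu hw
        rw [← Multiset.cons_coe, Multiset.cons_swap w, Multiset.cons_swap u]
        apply Multiset.sort_cons
        intro q hq
        simp only [Multiset.mem_cons, Multiset.mem_coe] at hq
        rcases hq with rfl | rfl | hq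
        exacts [hu, hw, hL.1 _ hq]
      refine ⟨m :: p, e, t₁, t₂, h1, h2, ?_, ?_⟩
      · rw [key a b hma (_root_.trans hma hab), h3]; rfl
      · rw [key c d (_root_.trans hma hac) (_root_.trans hma had), h4]; rfl
    · have ham : r a m := (Std.Total.total (r := r) a m).resolve_right hma
      apply base
      intro q hq
      rw [Multiset.mem_coe, List.mem_cons] at hq
      rcases hq with rfl | hq
      · exact ⟨ham, fun h => hma (h ▸ ham)⟩
      · refine ⟨_root_.trans ham (hL.1 q hq), ?_⟩
        rintro rfl
        exact hma (hL.1 _ hq)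

lemma not_lexLE_append (p t₁ t₂ : List ℝ) {e f : ℝ} (h : f < e) :
    ¬ lexLE (p ++ e :: t₁) (p ++ f :: t₂) := by
  rintro (h' | h')
  · have := List.append_cancel_left h'
    injection this with h1
    exact h.ne' h1
  · induction p with
    | nil =>
      cases h' with
      | cons _ => exact lt_irrefl _ h
      | rel h'' => exact lt_asymm h h''
    | cons q p ih =>
      cases h' with
      | cons h'' => exact ih h''
      | rel h'' => exact lt_irrefl _ h''

lemma descList_eq_sort (x : I → ℝ) :
    descList x = (Finset.univ.val.map x).sort (· ≥ ·) := by
  refine List.Perm.eq_of_pairwise' (r := (· ≥ ·)) ?_ (Multiset.pairwise_sort _ _) ?_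
  · rw [descList, List.pairwise_reverse]
    exact Multiset.pairwise_sort _ _
  · rw [descList]
    refine (List.reverse_perm _).trans ?_
    rw [← Multiset.coe_eq_coe, ascList, Multiset.sort_eq, Multiset.sort_eq]

/-! ### Transfers between two agents -/

/-- The payoff vector obtained from `x` when agent `i` gives the amount `t` to agent `j`. -/
def transfer (x : I → ℝ) (i j : I) (t : ℝ) : I → ℝ :=
  fun k => x k - (if k = i then t else 0) + (if k = j then t else 0)

lemma sum_transfer (x : I → ℝ) (i j : I) (t : ℝ) (C : Finset I) :
    ∑ k ∈ C, transfer x i j t k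
      = ∑ k ∈ C, x k - (if i ∈ C then t else 0) + (if j ∈ C then t else 0) := by
  simp [transfer, Finset.sum_add_distrib, Finset.sum_sub_distrib]

lemma transfer_left (x : I → ℝ) {i j : I} (hij : i ≠ j) (t : ℝ) :
    transfer x i j t i = x i - t := by
  simp [transfer, hij]

lemma transfer_right (x : I → ℝ) {i j : I} (hij : i ≠ j) (t : ℝ) :
    transfer x i j t j = x j + t := by
  simp [transfer, hij.symm]

lemma transfer_of_ne (x : I → ℝ) {i j k : I} (hi : k ≠ i) (hj : k ≠ j) (t : ℝ) :
    transfer x i j t k = x k := by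
  simp [transfer, hi, hj]

/-- A transfer only replaces the two entries of `i` and `j` in the multiset of payoffs. -/
lemma exists_map_transfer (x : I → ℝ) {i j : I} (hij : i ≠ j) (t : ℝ) :
    ∃ R : Multiset ℝ, Finset.univ.val.map x = x j ::ₘ x i ::ₘ R ∧
      Finset.univ.val.map (transfer x i j t) = (x j + t) ::ₘ (x i - t) ::ₘ R := by
  have hu : (Finset.univ : Finset I)
      = insert j (insert i ((Finset.univ.erase i).erase j)) := by
    ext k; simp; tauto
  have hv : (Finset.univ : Finset I).val
      = j ::ₘ i ::ₘ ((Finset.univ.erase i).erase j).val := by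
    conv_lhs => rw [hu]
    rw [Finset.insert_val_of_notMem (by simp [hij.symm]),
      Finset.insert_val_of_notMem (by simp)]
  refine ⟨((Finset.univ.erase i).erase j).val.map x, ?_, ?_⟩
  · rw [hv]; simp
  · rw [hv, Multiset.map_cons, Multiset.map_cons, transfer_left x hij, transfer_right x hij]
    congr 2
    refine Multiset.map_congr rfl fun k hk => ?_
    rw [Finset.mem_val] at hk
    simp only [Finset.mem_erase, Finset.mem_univ, and_true] at hk
    exact transfer_of_ne x hk.2 hk.1 t

lemma not_lexLE_ascList_transfer (x : I → ℝ) {i j : I} (hij : i ≠ j) {t : ℝ} (ht : 0 < t)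
    (h : t < x i - x j) : ¬ lexLE (ascList (transfer x i j t)) (ascList x) := by
  obtain ⟨R, h1, h2⟩ := exists_map_transfer x hij t
  obtain ⟨p, e, t₁, t₂, h3, h4, h5, h6⟩ := exists_first_diff (· ≤ ·) (x j) (x i) (x j + t)
    (x i - t) (by linarith) (by linarith) (by linarith) (by linarith)
    (by linarith) R
  rw [ascList, ascList, h1, h2, h5, h6]
  exact not_lexLE_append _ _ _ (lt_of_le_of_ne h3 h4)

lemma not_lexLE_descList_transfer (x : I → ℝ) {i j : I} (hij : i ≠ j) {t : ℝ} (ht : 0 < t)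
    (h : t < x i - x j) : ¬ lexLE (descList x) (descList (transfer x i j t)) := by
  obtain ⟨R, h1, h2⟩ := exists_map_transfer x hij t
  obtain ⟨p, e, t₁, t₂, h3, h4, h5, h6⟩ := exists_first_diff (· ≥ ·) (x i) (x j) (x i - t)
    (x j + t) (by linarith) (by linarith) (by linarith) (by linarith)
    (by linarith) R
  rw [descList_eq_sort, descList_eq_sort, h1, h2, Multiset.cons_swap, h5, Multiset.cons_swap, h6]
  exact not_lexLE_append _ _ _ (lt_of_le_of_ne h3 h4.symm)

lemma sqDev_transfer_lt (b s : Ω → I) (v : I → Finset Ω → EReal) (x : I → ℝ) {i j : I}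
    (hij : i ≠ j) {t : ℝ} (ht : 0 < t) (h : t < x i - x j) :
    sqDev b s v (transfer x i j t) < sqDev b s v x := by
  unfold sqDev
  obtain ⟨R, h1, h2⟩ := exists_map_transfer x hij t
  set m := (coalitionValue b s v Finset.univ).toReal / (Fintype.card I : ℝ)
  have key : ∀ y : I → ℝ, ∑ k, (y k - m) ^ 2
      = ((Finset.univ.val.map y).map fun q => (q - m) ^ 2).sum := by
    intro y
    rw [Multiset.map_map]; rfl
  rw [key, key, h1, h2]
  simp only [Multiset.map_cons, Multiset.sum_cons]
  nlinarith [mul_pos ht (sub_pos.2 h)]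

/-! ### The core -/

/-- The remaining agents can realise the market value without the inessential agent `i`. -/
lemma IsCoreImputation.eq_zero_of_not_isEssential {b s : Ω → I} {v : I → Finset Ω → EReal}
    (hv0 : ∀ i, v i ∅ = 0) {x : I → ℝ} (hx : IsCoreImputation b s v x) {i : I}
    (hi : ¬ IsEssential b s v i) : x i = 0 := by
  unfold IsEssential at hi
  push Not at hi
  obtain ⟨Φ, hΦ, hΦi⟩ := hi
  have hsub : Φ ∈ (coalitionTrades b s (Finset.univ.erase i)).powerset := by
    rw [Finset.mem_powerset]
    intro ω hω
    have : ω ∉ tradesOf b s i := fun h => by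
      have : ω ∈ Φ ∩ tradesOf b s i := Finset.mem_inter.2 ⟨hω, h⟩
      simp [hΦi] at this
    simpa [tradesOf, coalitionTrades, not_or] using this
  have h1 : coalitionValue b s v Finset.univ
      ≤ coalitionValue b s v (Finset.univ.erase i) := by
    rw [← hΦ, ← Finset.add_sum_erase _ _ (Finset.mem_univ i), hΦi, hv0, zero_add]
    exact Finset.le_sup' (fun Φ => ∑ k ∈ Finset.univ.erase i, v k (Φ ∩ tradesOf b s k)) hsub
  have h2 := (hx.2.1.le.trans h1).trans (hx.2.2 _)
  rw [EReal.coe_le_coe_iff, ← Finset.add_sum_erase _ _ (Finset.mem_univ i)] at h2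
  exact le_antisymm (by linarith) (hx.1 i)

/-- The exchange property of the core in the presence of at most three essential agents. -/
lemma IsCoreImputation.transfer {b s : Ω → I} {v : I → Finset Ω → EReal}
    (hv0 : ∀ i, v i ∅ = 0) (hcard : {i : I | IsEssential b s v i}.ncard ≤ 3)
    {x y : I → ℝ} (hx : IsCoreImputation b s v x) (hy : IsCoreImputation b s v y) {i j : I}
    {t : ℝ} (ht : 0 < t) (hi : t ≤ x i - y i) (hj : t ≤ y j - x j) :
    IsCoreImputation b s v (transfer x i j t) := by
  have hij : i ≠ j := by rintro rfl; linarith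
  have zx := fun k => hx.eq_zero_of_not_isEssential hv0 (i := k)
  have zy := fun k => hy.eq_zero_of_not_isEssential hv0 (i := k)
  have ei : IsEssential b s v i := by
    by_contra h
    rw [zx i h, zy i h] at hi; linarith
  have ej : IsEssential b s v j := by
    by_contra h
    rw [zx j h, zy j h] at hj; linarith
  refine ⟨?_, ?_, ?_⟩
  · intro k
    by_cases h1 : k = i
    · rw [h1, transfer_left x hij]; linarith [hy.1 i]
    by_cases h2 : k = j
    · rw [h2, transfer_right x hij]; linarith [hx.1 j]
    rw [transfer_of_ne x h1 h2]; exact hx.1 k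
  · rw [sum_transfer, ← hx.2.1]; simp
  · intro C
    rw [sum_transfer]
    by_cases hC : i ∈ C ∧ j ∉ C
    · refine (hy.2.2 C).trans (EReal.coe_le_coe_iff.2 ?_)
      rw [if_pos hC.1, if_neg hC.2, add_zero]
      by_cases hk : ∃ k ∈ C, k ≠ i ∧ IsEssential b s v k
      · -- `j` is the only essential agent outside `C`: compare the sums over the complement.
        obtain ⟨k, hkC, hki, ek⟩ := hk
        have hout : ∀ l ∈ Cᶜ, l ≠ j → ¬ IsEssential b s v l := by
          intro l hl hlj el
          rw [Finset.mem_compl] at hl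
          have hsub : ((({i, j, k, l} : Finset I)) : Set I) ⊆ {i | IsEssential b s v i} := by
            intro q hq
            simp only [Finset.coe_insert, Finset.coe_singleton, Set.mem_insert_iff,
              Set.mem_singleton_iff] at hq
            rcases hq with rfl | rfl | rfl | rfl <;> assumption
          have hle := Set.ncard_le_ncard hsub (Set.toFinite _)
          have hkj : j ≠ k := fun h => hC.2 (h ▸ hkC)
          have hil : i ≠ l := fun h => hl (h ▸ hC.1)
          have hkl : k ≠ l := fun h => hl (h ▸ hkC)
          have hfour : ({i, j, k, l} : Finset I).card = 4 :=
            Finset.card_eq_succ.2 ⟨i, {j, k, l}, by simp [hij, hki.symm, hil], rfl,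
              Finset.card_eq_three.2 ⟨j, k, l, hkj, hlj.symm, hkl, rfl⟩⟩
          rw [Set.ncard_coe_finset] at hle
          omega
        have hjC : j ∈ Cᶜ := Finset.mem_compl.2 hC.2
        have sx : ∑ l ∈ Cᶜ, x l = x j :=
          Finset.sum_eq_single_of_mem j hjC fun l hl hlj => zx l (hout l hl hlj)
        have sy : ∑ l ∈ Cᶜ, y l = y j :=
          Finset.sum_eq_single_of_mem j hjC fun l hl hlj => zy l (hout l hl hlj)
        have tot : ∑ l, x l = ∑ l, y l := EReal.coe_injective (hx.2.1.trans hy.2.1.symm)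
        rw [← Finset.sum_add_sum_compl C x, ← Finset.sum_add_sum_compl C y, sx, sy] at tot
        linarith
      · push Not at hk
        rw [Finset.sum_eq_single_of_mem i hC.1 fun l hl hli => zx l (hk l hl hli),
          Finset.sum_eq_single_of_mem i hC.1 fun l hl hli => zy l (hk l hl hli)]
        linarith
    · refine (hx.2.2 C).trans (EReal.coe_le_coe_iff.2 ?_)
      by_cases h1 : i ∈ C
      · have h2 : j ∈ C := by tauto
        simp [h1, h2]
      · rw [if_neg h1]
        split_ifs <;> linarith

/-- A core imputation `x` is transfer-stable if no transfer from a richer agent `i` to a poorer agent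
`j` stays in the core. Only amounts below `x i - x j` count: these shrink the gap between the two,
although they may reverse its sign. -/
def TransferStable (b s : Ω → I) (v : I → Finset Ω → EReal) (x : I → ℝ) : Prop :=
  IsCoreImputation b s v x ∧ ∀ (i j : I) (t : ℝ), i ≠ j → 0 < t → t < x i - x j →
    ¬ IsCoreImputation b s v (transfer x i j t)

/-- If `x` is transfer-stable, an agent who has more in `x` than in another core imputation `y` is in
`x` no richer than an agent who has less in `x` than in `y`. -/
lemma TransferStable.le {b s : Ω → I} {v : I → Finset Ω → EReal}
    (hv0 : ∀ i, v i ∅ = 0) (hcard : {i : I | IsEssential b s v i}.ncard ≤ 3)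
    {x y : I → ℝ} (hx : TransferStable b s v x) (hy : IsCoreImputation b s v y) {i j : I}
    (hi : y i < x i) (hj : x j < y j) : x i ≤ x j := by
  by_contra! h
  have hij : i ≠ j := by rintro rfl; exact lt_asymm hi hj
  have hpos : 0 < min (min (x i - y i) (y j - x j)) ((x i - x j) / 2) :=
    lt_min (lt_min (by linarith) (by linarith)) (by linarith)
  obtain ⟨t, ht⟩ : ∃ t, t = min (min (x i - y i) (y j - x j)) ((x i - x j) / 2) := ⟨_, rfl⟩
  rw [← ht] at hpos
  have h1 : t ≤ x i - y i := ht ▸ (min_le_left _ _).trans (min_le_left _ _)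
  have h2 : t ≤ y j - x j := ht ▸ (min_le_left _ _).trans (min_le_right _ _)
  have h3 : t ≤ (x i - x j) / 2 := ht ▸ min_le_right _ _
  exact hx.2 i j t hij hpos (by linarith) (hx.1.transfer hv0 hcard hy hpos h1 h2)

lemma TransferStable.unique {b s : Ω → I} {v : I → Finset Ω → EReal}
    (hv0 : ∀ i, v i ∅ = 0) (hcard : {i : I | IsEssential b s v i}.ncard ≤ 3)
    {x y : I → ℝ} (hx : TransferStable b s v x) (hy : TransferStable b s v y) : x = y := by
  have tot : ∑ l, x l = ∑ l, y l := EReal.coe_injective (hx.1.2.1.trans hy.1.2.1.symm)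
  by_contra hne
  have hi : ∃ i, y i < x i := by
    by_contra! h
    exact hne (funext fun k =>
      (Finset.sum_eq_sum_iff_of_le fun k _ => h k).1 tot k (Finset.mem_univ k))
  have hj : ∃ j, x j < y j := by
    by_contra! h
    exact hne (funext fun k =>
      ((Finset.sum_eq_sum_iff_of_le fun k _ => h k).1 tot.symm k (Finset.mem_univ k)).symm)
  obtain ⟨i, hi⟩ := hi
  obtain ⟨j, hj⟩ := hj
  have h1 := hx.le hv0 hcard hy.1 hi hj
  have h2 := hy.le hv0 hcard hx.1 hj hi
  linarith


/-- In a market with at most three essential agents and a non-empty core,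
the leximin, leximax, and minimum-variance core imputations coincide. -/
theorem leximin_leximax_minvar_coincide_of_at_most_three
    (b s : Ω → I) (v : I → Finset Ω → EReal)
    (hbs : ∀ ω, b ω ≠ s ω) (hv0 : ∀ i, v i ∅ = 0) (hvtop : ∀ i Ψ, v i Ψ ≠ ⊤)
    (hcard : {i : I | IsEssential b s v i}.ncard ≤ 3)
    (hne : ∃ u : I → ℝ, IsCoreImputation b s v u)
    (x y z : I → ℝ)
    (hx : IsLeximinCore b s v x) (hy : IsLeximaxCore b s v y) (hz : IsMinvarCore b s v z) :
    x = y ∧ y = z := by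
  have sx : TransferStable b s v x := ⟨hx.1, fun i j t hij ht h hc =>
    not_lexLE_ascList_transfer x hij ht h (hx.2 _ hc)⟩
  have sy : TransferStable b s v y := ⟨hy.1, fun i j t hij ht h hc =>
    not_lexLE_descList_transfer y hij ht h (hy.2 _ hc)⟩
  have sz : TransferStable b s v z := ⟨hz.1, fun i j t hij ht h hc =>
    (sqDev_transfer_lt b s v z hij ht h).not_ge (hz.2 _ hc)⟩
  exact ⟨sx.unique hv0 hcard sy, sy.unique hv0 hcard sz⟩
end

section
/- Fix a trading network market, and for each agent i define τ^i(Ψ) = (Ψ ∩ {ω ∈ Ω_i : b(ω) = i}) ∪ ({ω ∈ Ω_i : s(ω) = i} \ Ψ) for Ψ ⊆ Ω_i, the auction valuation v̂^i(Ψ) = v^i(τ^i(Ψ)), and the auction demand D̂^i(p) as the set of Ψ ⊆ Ω_i maximizing v̂^i(Ψ) − Σ_{ω ∈ Ψ} p_ω. A market arrangement (p, Φ) with p ∈ ℝ^Ω and Φ ⊆ Ω is a competitive equilibrium of the market if and only if the family (Ψ_i)_{i ∈ I} with Ψ_i = τ^i(Φ ∩ Ω_i) is an auction competitive equilibrium at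 prices p, i.e. the Ψ_i are pairwise disjoint, ⋃_{i ∈ I} Ψ_i = Ω, and Ψ_i ∈ D̂^i(p) for every agent i. -/
/-!
For a fixed agent `i`, the map `τ^i` is an involution on the bundles `Ψ ⊆ Ω_i` (no agent is both
buyer and seller of a trade), and for such `Ψ` the cost of `τ^i(Ψ)` in the auction differs from the
net payment for `Ψ` in the market by `∑ p_ω` over the selling trades of `i`, which does not depend
on `Ψ`. Hence the auction utility of `τ^i(Ψ)` is the market utility of `Ψ` minus a real constant
(`auctionUtility_tauMap`), and `τ^i` matches market demand with auction demand
(`tauMap_mem_auctionDemand_iff`).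

The disjointness and covering conditions hold for every `Φ`: a trade `ω` lies in
`τ^i(Φ ∩ Ω_i)` exactly when `i` is the buyer and `ω ∈ Φ`, or `i` is the seller and `ω ∉ Φ`, so it is
assigned to exactly one agent (`mem_tauMap_inter_iff`).
-/

open Finset

variable {I Ω : Type*} [Fintype I] [DecidableEq I] [Fintype Ω] [DecidableEq Ω]

/-- The auction mapping `τ^i`: buying trades of `i` in `Ψ`, together with selling trades of
`i` not in `Ψ`. -/
def tauMap (b s : Ω → I) (i : I) (Ψ : Finset Ω) : Finset Ω :=
  (Ψ ∩ ((tradesOf b s i).filter fun ω => b ω = i)) ∪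
    (((tradesOf b s i).filter fun ω => s ω = i) \ Ψ)

/-- Auction utility of agent `i` from bundle `Ψ` at prices `p`, using the auction
valuation `v̂^i(Ψ) = v^i(τ^i(Ψ))`. -/
noncomputable def auctionUtility (b s : Ω → I) (v : I → Finset Ω → EReal) (i : I)
    (Ψ : Finset Ω) (p : Ω → ℝ) : EReal :=
  v i (tauMap b s i Ψ) - ((∑ ω ∈ Ψ, p ω : ℝ) : EReal)

/-- Auction demand of agent `i` at prices `p`. -/
noncomputable def auctionDemand (b s : Ω → I) (v : I → Finset Ω → EReal) (i : I)
    (p : Ω → ℝ) : Set (Finset Ω) :=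
  {Ψ | Ψ ⊆ tradesOf b s i ∧
    ∀ Ψ' ⊆ tradesOf b s i, auctionUtility b s v i Ψ' p ≤ auctionUtility b s v i Ψ p}

theorem mem_tauMap_iff (b s : Ω → I) (i : I) (Ψ : Finset Ω) (ω : Ω) :
    ω ∈ tauMap b s i Ψ ↔ (b ω = i ∧ ω ∈ Ψ) ∨ (s ω = i ∧ ω ∉ Ψ) := by
  simp only [tauMap, tradesOf, mem_union, mem_inter, mem_sdiff, mem_filter, mem_univ, true_and]
  tauto

theorem tauMap_subset (b s : Ω → I) (i : I) (Ψ : Finset Ω) :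
    tauMap b s i Ψ ⊆ tradesOf b s i := by
  intro ω hω
  rw [mem_tauMap_iff] at hω
  simp only [tradesOf, mem_filter, mem_univ, true_and]
  tauto

theorem tauMap_tauMap (b s : Ω → I) (hbs : ∀ ω, b ω ≠ s ω) (i : I) {Ψ : Finset Ω}
    (hΨ : Ψ ⊆ tradesOf b s i) : tauMap b s i (tauMap b s i Ψ) = Ψ := by
  ext ω
  have h1 := hbs ω
  have h2 : ω ∈ Ψ → b ω = i ∨ s ω = i := fun h => by simpa [tradesOf] using hΨ h
  simp only [mem_tauMap_iff]
  grind

/-- Under the assignment induced by `Φ`, each trade goes to its buyer if it is in `Φ` and to its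
seller otherwise. -/
theorem mem_tauMap_inter_iff (b s : Ω → I) (i : I) (Φ : Finset Ω) (ω : Ω) :
    ω ∈ tauMap b s i (Φ ∩ tradesOf b s i) ↔ (if ω ∈ Φ then b ω else s ω) = i := by
  simp only [mem_tauMap_iff, mem_inter, tradesOf, mem_filter, mem_univ, true_and]
  split_ifs <;> tauto

theorem sum_tauMap (b s : Ω → I) (hbs : ∀ ω, b ω ≠ s ω) (i : I) {Ψ : Finset Ω}
    (hΨ : Ψ ⊆ tradesOf b s i) (p : Ω → ℝ) :
    ∑ ω ∈ tauMap b s i Ψ, p ω =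
      ∑ ω ∈ Ψ, chi b s i ω * p ω + ∑ ω with s ω = i, p ω := by
  -- All three sums become sums over `Ω` of indicator terms, compared trade by trade.
  rw [sum_filter, ← univ_inter (tauMap b s i Ψ), ← univ_inter Ψ, ← sum_ite_mem, ← sum_ite_mem,
    ← sum_add_distrib, univ_inter]
  refine sum_congr rfl fun ω _ => ?_
  have h1 := hbs ω
  have h2 : ω ∈ Ψ → b ω = i ∨ s ω = i := fun h => by simpa [tradesOf] using hΨ h
  simp only [mem_tauMap_iff, chi]
  grind

/-- Passing to the auction through `τ^i` shifts the utility of every bundle by the same real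
constant. -/
theorem auctionUtility_tauMap (b s : Ω → I) (v : I → Finset Ω → EReal)
    (hbs : ∀ ω, b ω ≠ s ω) (i : I) {Ψ : Finset Ω} (hΨ : Ψ ⊆ tradesOf b s i) (p : Ω → ℝ) :
    auctionUtility b s v i (tauMap b s i Ψ) p =
      utility b s v i Ψ p - ((∑ ω with s ω = i, p ω : ℝ) : EReal) := by
  rw [auctionUtility, utility, tauMap_tauMap b s hbs i hΨ, sum_tauMap b s hbs i hΨ,
    sub_eq_add_neg, sub_eq_add_neg, sub_eq_add_neg, add_assoc, ← EReal.coe_neg, ← EReal.coe_neg,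
    ← EReal.coe_neg, ← EReal.coe_add, neg_add]

theorem auctionUtility_tauMap_le_iff (b s : Ω → I) (v : I → Finset Ω → EReal)
    (hbs : ∀ ω, b ω ≠ s ω) (i : I) {Ψ Ψ' : Finset Ω} (hΨ : Ψ ⊆ tradesOf b s i)
    (hΨ' : Ψ' ⊆ tradesOf b s i) (p : Ω → ℝ) :
    auctionUtility b s v i (tauMap b s i Ψ') p ≤ auctionUtility b s v i (tauMap b s i Ψ) p ↔
      utility b s v i Ψ' p ≤ utility b s v i Ψ p := by
  rw [auctionUtility_tauMap b s v hbs i hΨ, auctionUtility_tauMap b s v hbs i hΨ']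
  refine ⟨fun h => ?_, fun h => EReal.sub_le_sub h le_rfl⟩
  have h' := add_le_add_left h ((∑ ω with s ω = i, p ω : ℝ) : EReal)
  rwa [EReal.sub_add_cancel, EReal.sub_add_cancel] at h'

theorem tauMap_mem_auctionDemand_iff (b s : Ω → I) (v : I → Finset Ω → EReal)
    (hbs : ∀ ω, b ω ≠ s ω) (i : I) {Ψ : Finset Ω} (hΨ : Ψ ⊆ tradesOf b s i) (p : Ω → ℝ) :
    tauMap b s i Ψ ∈ auctionDemand b s v i p ↔ Ψ ∈ demand b s v i p := by
  constructor
  · rintro ⟨-, h⟩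
    exact ⟨hΨ, fun Ψ' hΨ' =>
      (auctionUtility_tauMap_le_iff b s v hbs i hΨ hΨ' p).1 (h _ (tauMap_subset b s i Ψ'))⟩
  · rintro ⟨-, h⟩
    refine ⟨tauMap_subset b s i Ψ, fun Ψ' hΨ' => ?_⟩
    -- Every competing auction bundle is itself the image under `τ^i` of a market bundle.
    rw [← tauMap_tauMap b s hbs i hΨ']
    exact (auctionUtility_tauMap_le_iff b s v hbs i hΨ (tauMap_subset b s i Ψ') p).2
      (h _ (tauMap_subset b s i Ψ'))

/-- `(p, Φ)` is a competitive equilibrium of the market iff the family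
`Ψ_i = τ^i(Φ ∩ Ω_i)` is an auction competitive equilibrium at prices `p`. -/
theorem competitive_equilibrium_mapping
    (b s : Ω → I) (v : I → Finset Ω → EReal)
    (hbs : ∀ ω, b ω ≠ s ω) (hv0 : ∀ i, v i ∅ = 0) (hvtop : ∀ i Ψ, v i Ψ ≠ ⊤)
    (p : Ω → ℝ) (Φ : Finset Ω) :
    IsCompetitiveEquilibrium b s v p Φ ↔
      ((∀ i j : I, i ≠ j →
          Disjoint (tauMap b s i (Φ ∩ tradesOf b s i)) (tauMap b s j (Φ ∩ tradesOf b s j))) ∧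
        (Finset.univ.biUnion fun i => tauMap b s i (Φ ∩ tradesOf b s i)) = Finset.univ ∧
        ∀ i : I, tauMap b s i (Φ ∩ tradesOf b s i) ∈ auctionDemand b s v i p) := by
  have hdem : ∀ i, tauMap b s i (Φ ∩ tradesOf b s i) ∈ auctionDemand b s v i p ↔
      Φ ∩ tradesOf b s i ∈ demand b s v i p := fun i =>
    tauMap_mem_auctionDemand_iff b s v hbs i inter_subset_right p
  simp only [hdem]
  refine ⟨fun h => ⟨fun i j hij => ?_, ?_, h⟩, fun h => h.2.2⟩
  · rw [disjoint_left]
    intro ω hi hj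
    rw [mem_tauMap_inter_iff] at hi hj
    exact hij (hi.symm.trans hj)
  · ext ω
    simp only [mem_biUnion, mem_univ, true_and, iff_true]
    exact ⟨_, (mem_tauMap_inter_iff b s _ Φ ω).2 rfl⟩
end
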